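/- Fix an integer d ≥ 3 and a real p with 1/(d-1) < p < 1. For every ε > 0 and b > 0 there exist R and c > 0 such that: if 𝒢 is a regular (b,d)-expander on n vertices with girth greater than 2R, and G ∼ 𝒢_p, then the probability that the symmetric difference E₁(G) △ E(C₁(G)) has more than εn elements is at most exp(−c n), and the probability that the symmetric difference V₁(G) △ V(C₁(G)) has more than εn elements is at most exp(−c n), where C₁(G) is a largest connected component of G. -/

import Mathlib

open scoped Classical symmDiff

noncomputable section

namespace Percolation

variable {V : Type} [Fintype V] [DecidableEq V]

/-- The edge set of `G` as a finset. -/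
noncomputable def edgeFinset' (G : SimpleGraph V) : Finset (Sym2 V) :=
  Finset.univ.filter (· ∈ G.edgeSet)

/-- Probability that bond percolation on `G` with parameter `p` produces a spanning
subgraph satisfying `P`. -/
noncomputable def percProb (G : SimpleGraph V) (p : ℝ) (P : SimpleGraph V → Prop) : ℝ :=
  ∑ s ∈ (edgeFinset' G).powerset,
    (p ^ s.card * (1 - p) ^ ((edgeFinset' G).card - s.card)) *
      (if P (SimpleGraph.fromEdgeSet (↑s)) then 1 else 0)

/-- Joint probability for two independent bond percolations on `G`. -/
noncomputable def percProb2 (G : SimpleGraph V) (p₁ p₂ : ℝ)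
    (P : SimpleGraph V → SimpleGraph V → Prop) : ℝ :=
  ∑ s ∈ (edgeFinset' G).powerset, ∑ t ∈ (edgeFinset' G).powerset,
    (p₁ ^ s.card * (1 - p₁) ^ ((edgeFinset' G).card - s.card)) *
    (p₂ ^ t.card * (1 - p₂) ^ ((edgeFinset' G).card - t.card)) *
      (if P (SimpleGraph.fromEdgeSet (↑s)) (SimpleGraph.fromEdgeSet (↑t)) then 1 else 0)

/-- Number of edges of `G` joining `S` to its complement. -/
noncomputable def cutCard (G : SimpleGraph V) (S : Finset V) : ℕ :=
  ((edgeFinset' G).filter (fun e => ∃ x ∈ S, ∃ y, y ∉ S ∧ e = s(x, y))).card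

/-- `G` is a `(b,d)`-expander: max degree at most `d`, and every vertex set of size at most
`n/2` has at least `b|S|` edges to its complement. -/
def IsExpander (G : SimpleGraph V) (b : ℝ) (d : ℕ) : Prop :=
  (∀ v, (G.neighborSet v).ncard ≤ d) ∧
  ∀ S : Finset V, (S.card : ℝ) ≤ Fintype.card V / 2 → b * S.card ≤ cutCard G S

/-- `G` is a regular `(b,d)`-expander. -/
def IsRegularExpander (G : SimpleGraph V) (b : ℝ) (d : ℕ) : Prop :=
  IsExpander G b d ∧ ∀ v, (G.neighborSet v).ncard = d

/-- The vertices of the connected component `c` of `G`. -/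
noncomputable def compVerts (G : SimpleGraph V) (c : G.ConnectedComponent) : Finset V :=
  Finset.univ.filter (fun v => G.connectedComponentMk v = c)

/-- The edges of the connected component `c` of `G`. -/
noncomputable def compEdges (G : SimpleGraph V) (c : G.ConnectedComponent) : Finset (Sym2 V) :=
  (edgeFinset' G).filter (fun e => ∀ v ∈ e, G.connectedComponentMk v = c)

/-- `c` is a largest connected component of `G`. -/
def IsLargestComp (G : SimpleGraph V) (c : G.ConnectedComponent) : Prop :=
  ∀ c' : G.ConnectedComponent, (compVerts G c').card ≤ (compVerts G c).card

/-- The 2-core of the connected component `c` of `G` : the maximal subgraph of `G`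
supported inside `c` all of whose vertices have degree at least 2. -/
noncomputable def twoCoreComp (G : SimpleGraph V) (c : G.ConnectedComponent) : SimpleGraph V :=
  sSup {H : SimpleGraph V | H ≤ G ∧ (∀ v ∈ H.support, G.connectedComponentMk v = c) ∧
    ∀ v ∈ H.support, 2 ≤ (H.neighborSet v).ncard}

/-- The event `A^R_{x,y}(H)`: the connected component of `y` in `H` with the edge `xy`
removed (if present) has at least `R` vertices. -/
def eventA (H : SimpleGraph V) (R : ℕ) (x y : V) : Prop :=
  R ≤ (compVerts (H.deleteEdges {s(x, y)})
        ((H.deleteEdges {s(x, y)}).connectedComponentMk y)).card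

/-- `E₁(H)`: edges `xy` of `H` such that `A^R_{x,y}` or `A^R_{y,x}` holds. -/
noncomputable def E1set (H : SimpleGraph V) (R : ℕ) : Finset (Sym2 V) :=
  (edgeFinset' H).filter (fun e => ∃ x y, e = s(x, y) ∧ (eventA H R x y ∨ eventA H R y x))

/-- `V₁(H)`: vertices `x` such that for some `y`, `xy ∈ E(H)` and `A^R_{x,y}` holds. -/
noncomputable def V1set (H : SimpleGraph V) (R : ℕ) : Finset V :=
  Finset.univ.filter (fun x => ∃ y, H.Adj x y ∧ eventA H R x y)

/-- `E₂(H)`: edges `xy` of `H` such that both `A^R_{x,y}` and `A^R_{y,x}` hold. -/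
noncomputable def E2set (H : SimpleGraph V) (R : ℕ) : Finset (Sym2 V) :=
  (edgeFinset' H).filter (fun e => ∃ x y, e = s(x, y) ∧ eventA H R x y ∧ eventA H R y x)

/-- `V₂(H)`: vertices incident to an edge of `E₂(H)`. -/
noncomputable def V2set (H : SimpleGraph V) (R : ℕ) : Finset V :=
  Finset.univ.filter (fun x => ∃ e ∈ E2set H R, x ∈ e)

/-- `V̄₁(H)`: vertices `y` such that `A^R_{x,y}(H)` holds for some `x`. -/
noncomputable def Vbar1 (H : SimpleGraph V) (R : ℕ) : Finset V :=
  Finset.univ.filter (fun y => ∃ x, eventA H R x y)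

/-- `S` is `k`-thick in `H`: a union of pairwise disjoint subsets, each of size at least
`k`, each inducing a connected subgraph of `H`. -/
def IsThick (H : SimpleGraph V) (k : ℕ) (S : Finset V) : Prop :=
  ∃ P : Finset (Finset V),
    (∀ T ∈ P, k ≤ T.card ∧ (H.induce (↑T : Set V)).Connected) ∧
    (↑P : Set (Finset V)).PairwiseDisjoint id ∧ S = P.biUnion id

/-- `S` is a separator of `K`. -/
def IsSeparator {W : Type} [Fintype W] (K : SimpleGraph W) (S : Finset W) : Prop :=
  ∃ A B : Finset W, Disjoint A B ∧ Disjoint A S ∧ Disjoint B S ∧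
    (∀ w, w ∈ A ∨ w ∈ B ∨ w ∈ S) ∧
    (∀ a ∈ A, ∀ b ∈ B, ¬ K.Adj a b) ∧
    3 * A.card ≤ 2 * Fintype.card W ∧ 3 * B.card ≤ 2 * Fintype.card W

/-!
Realise the configuration `u` of parameter `p` as `s ∪ t`, where `s` has a parameter slightly below
`p` and `t` is an independent sprinkling. Say that a dart `(x, y)` has a long branch if some open
non-backtracking walk of length `k` continues it. Below the girth, branches are trees, so a dart has
a long branch with the survival probability of a Galton–Watson process. The number of darts with a
long branch is concentrated by bounded differences, and the survival probability is left continuous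
in `p`, so few darts acquire a long branch between `s` and `u`. Expansion gives many edge-disjoint
short paths between any two large vertex sets, so by a union bound over the few components of `s`
with more than `k` vertices, `t` joins these, up to a few vertices, into one component of `u`.
If `A^R_{x,y}` holds for an open edge `xy` of `u` outside this component, then either `(x, y)` has
acquired its long branch or `y` is one of the few vertices left out.
-/

section BernoulliSubset

variable {α ι : Type*} {p : ℝ} {E : Finset α}

/-- The expectation of `f s`, where the random subset `s` of `E` contains each element
independently with probability `p`. -/
def bernoulliExp (p : ℝ) (E : Finset α) (f : Finset α → ℝ) : ℝ :=
  ∑ s ∈ E.powerset, (p ^ s.card * (1 - p) ^ (E.card - s.card)) * f s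

/-- The probability of `P s`, where the random subset `s` of `E` contains each element
independently with probability `p`. -/
def bernoulliProb (p : ℝ) (E : Finset α) (P : Finset α → Prop) : ℝ :=
  bernoulliExp p E fun s => if P s then 1 else 0

lemma bernoulliExp_empty (f : Finset α → ℝ) : bernoulliExp p ∅ f = f ∅ := by
  simp [bernoulliExp]

lemma bernoulliExp_add (f g : Finset α → ℝ) :
    bernoulliExp p E (fun s => f s + g s) = bernoulliExp p E f + bernoulliExp p E g := by
  simp only [bernoulliExp, mul_add, Finset.sum_add_distrib]

lemma bernoulliExp_const_mul (c : ℝ) (f : Finset α → ℝ) :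
    bernoulliExp p E (fun s => c * f s) = c * bernoulliExp p E f := by
  simp only [bernoulliExp, Finset.mul_sum, mul_left_comm c]

lemma bernoulliExp_sum (I : Finset ι) (f : ι → Finset α → ℝ) :
    bernoulliExp p E (fun s => ∑ i ∈ I, f i s) = ∑ i ∈ I, bernoulliExp p E (f i) := by
  simp only [bernoulliExp, Finset.mul_sum]
  exact Finset.sum_comm

lemma bernoulliExp_mono (hp : p ∈ Set.Icc 0 1) {f g : Finset α → ℝ} (h : ∀ s ⊆ E, f s ≤ g s) :
    bernoulliExp p E f ≤ bernoulliExp p E g :=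
  Finset.sum_le_sum fun s hs => mul_le_mul_of_nonneg_left (h s (Finset.mem_powerset.1 hs))
    (mul_nonneg (pow_nonneg hp.1 _) (pow_nonneg (sub_nonneg.2 hp.2) _))

lemma bernoulliExp_insert [DecidableEq α] {e : α} (he : e ∉ E) (f : Finset α → ℝ) :
    bernoulliExp p (insert e E) f =
      p * bernoulliExp p E (fun s => f (insert e s)) + (1 - p) * bernoulliExp p E f := by
  unfold bernoulliExp
  rw [Finset.sum_powerset_insert he, add_comm, Finset.mul_sum, Finset.mul_sum]
  congr 1 <;> refine Finset.sum_congr rfl fun s hs => ?_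
  · have hes : e ∉ s := fun h => he (Finset.mem_powerset.1 hs h)
    rw [Finset.card_insert_of_notMem hes, Finset.card_insert_of_notMem he, Nat.add_sub_add_right]
    ring
  · have hcard := Finset.card_le_card (Finset.mem_powerset.1 hs)
    rw [Finset.card_insert_of_notMem he, Nat.sub_add_comm hcard]
    ring

lemma bernoulliExp_const (c : ℝ) : bernoulliExp p E (fun _ => c) = c := by
  induction E using Finset.induction_on with
  | empty => rw [bernoulliExp_empty]
  | insert e E he ih => rw [bernoulliExp_insert he, ih]; ring

lemma bernoulliExp_union [DecidableEq α] {p₁ p₂ : ℝ} (h : 1 - p = (1 - p₁) * (1 - p₂))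
    (f : Finset α → ℝ) :
    bernoulliExp p E f =
      bernoulliExp p₁ E fun s => bernoulliExp p₂ E fun t => f (s ∪ t) := by
  induction E using Finset.induction_on generalizing f with
  | empty => simp only [bernoulliExp_empty, Finset.union_empty]
  | insert e E he ih =>
    simp only [bernoulliExp_insert he, bernoulliExp_add, bernoulliExp_const_mul,
      Finset.insert_union, Finset.union_insert, Finset.insert_idem]
    rw [ih f, ih fun s => f (insert e s)]
    obtain rfl : p = 1 - (1 - p₁) * (1 - p₂) := by linarith
    ring

lemma bernoulliProb_mono (hp : p ∈ Set.Icc 0 1) {P Q : Finset α → Prop}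
    (h : ∀ s ⊆ E, P s → Q s) : bernoulliProb p E P ≤ bernoulliProb p E Q :=
  bernoulliExp_mono hp fun s hs => by
    by_cases hP : P s
    · simp only [hP, h s hs hP, if_true, le_refl]
    · simp only [hP, if_false]
      split_ifs <;> norm_num

lemma bernoulliProb_nonneg (hp : p ∈ Set.Icc 0 1) (P : Finset α → Prop) :
    0 ≤ bernoulliProb p E P :=
  (bernoulliExp_const 0).symm.trans_le
    (bernoulliExp_mono hp fun s _ => by split_ifs <;> norm_num)

lemma bernoulliProb_true : bernoulliProb p E (fun _ => True) = 1 := by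
  simpa only [bernoulliProb, if_true] using bernoulliExp_const 1

lemma bernoulliProb_not (P : Finset α → Prop) :
    bernoulliProb p E (fun s => ¬ P s) = 1 - bernoulliProb p E P := by
  rw [eq_sub_iff_add_eq, bernoulliProb, bernoulliProb, ← bernoulliExp_add]
  refine (congrArg _ (funext fun s => ?_)).trans (bernoulliExp_const 1)
  split_ifs <;> norm_num

lemma bernoulliProb_exists_le (hp : p ∈ Set.Icc 0 1) (I : Finset ι) (P : ι → Finset α → Prop) :
    bernoulliProb p E (fun s => ∃ i ∈ I, P i s) ≤ ∑ i ∈ I, bernoulliProb p E (P i) := by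
  unfold bernoulliProb
  rw [← bernoulliExp_sum]
  refine bernoulliExp_mono hp fun s _ => ?_
  have hnonneg : ∀ i ∈ I, (0 : ℝ) ≤ if P i s then 1 else 0 := fun i _ => by
    split_ifs <;> norm_num
  split_ifs with h
  · obtain ⟨i, hi, hP⟩ := h
    simpa only [hP, if_true] using Finset.single_le_sum hnonneg hi
  · exact Finset.sum_nonneg hnonneg

lemma bernoulliProb_or_le (hp : p ∈ Set.Icc 0 1) (P Q : Finset α → Prop) :
    bernoulliProb p E (fun s => P s ∨ Q s) ≤ bernoulliProb p E P + bernoulliProb p E Q := by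
  unfold bernoulliProb
  rw [← bernoulliExp_add]
  exact bernoulliExp_mono hp fun s _ => by
    by_cases hP : P s <;> by_cases hQ : Q s <;> simp [hP, hQ]

lemma bernoulliProb_le_bernoulliExp (hp : p ∈ Set.Icc 0 1) {P : Finset α → Prop}
    {f : Finset α → ℝ} (hf : ∀ s, 0 ≤ f s) (hP : ∀ s, P s → 1 ≤ f s) :
    bernoulliProb p E P ≤ bernoulliExp p E f :=
  bernoulliExp_mono hp fun s _ => by split_ifs with h; exacts [hP s h, hf s]

lemma bernoulliProb_union [DecidableEq α] {p₁ p₂ : ℝ} (h : 1 - p = (1 - p₁) * (1 - p₂))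
    (P : Finset α → Prop) :
    bernoulliProb p E P =
      bernoulliExp p₁ E fun s => bernoulliProb p₂ E fun t => P (s ∪ t) :=
  bernoulliExp_union h _

lemma bernoulliProb_le_of_sprinkling [DecidableEq α] {p₁ p₂ q : ℝ} (hp₁ : p₁ ∈ Set.Icc 0 1)
    (hp₂ : p₂ ∈ Set.Icc 0 1) (hp : 1 - p = (1 - p₁) * (1 - p₂)) {P Q P₁ : Finset α → Prop}
    {P₂ : Finset α → Finset α → Prop}
    (h : ∀ s ⊆ E, ∀ t ⊆ E, P (s ∪ t) → Q (s ∪ t) ∨ P₁ s ∨ P₂ s t)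
    (hq : ∀ s, bernoulliProb p₂ E (P₂ s) ≤ q) :
    bernoulliProb p E P ≤ bernoulliProb p E Q + bernoulliProb p₁ E P₁ + q := by
  have hs : ∀ s ⊆ E, bernoulliProb p₂ E (fun t => P (s ∪ t)) ≤
      bernoulliProb p₂ E (fun t => Q (s ∪ t)) + ((if P₁ s then 1 else 0) + q) := fun s hs => by
    have hsplit := (bernoulliProb_mono hp₂ (h s hs)).trans (bernoulliProb_or_le hp₂ _ _)
    have hor := bernoulliProb_or_le (E := E) hp₂ (fun _ => P₁ s) (P₂ s)
    have hconst : bernoulliProb p₂ E (fun _ => P₁ s) = if P₁ s then 1 else 0 :=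
      bernoulliExp_const _
    linarith [hq s]
  calc bernoulliProb p E P
      = bernoulliExp p₁ E fun s => bernoulliProb p₂ E fun t => P (s ∪ t) :=
        bernoulliProb_union hp P
    _ ≤ bernoulliExp p₁ E fun s =>
          bernoulliProb p₂ E (fun t => Q (s ∪ t)) + ((if P₁ s then 1 else 0) + q) :=
        bernoulliExp_mono hp₁ hs
    _ = bernoulliProb p E Q + bernoulliProb p₁ E P₁ + q := by
        rw [bernoulliExp_add, bernoulliExp_add, bernoulliExp_const, ← bernoulliProb_union hp,
          ← add_assoc]
        rfl

section Independence

variable [DecidableEq α]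

/-- Whether `P s` holds is determined by `s ∩ F`. -/
def DependsOnly (P : Finset α → Prop) (F : Finset α) : Prop :=
  ∀ e ∉ F, ∀ s, P (insert e s) ↔ P s

lemma DependsOnly.comp_insert {P : Finset α → Prop} {F : Finset α} (h : DependsOnly P F) (a : α) :
    DependsOnly (fun s => P (insert a s)) F := fun e he s => by
  simpa only [Finset.insert_comm a e s] using h e he (insert a s)

lemma DependsOnly.not {P : Finset α → Prop} {F : Finset α} (h : DependsOnly P F) :
    DependsOnly (fun s => ¬ P s) F :=
  fun e he s => not_congr (h e he s)

lemma DependsOnly.and {P Q : Finset α → Prop} {F₁ F₂ : Finset α} (hP : DependsOnly P F₁)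
    (hQ : DependsOnly Q F₂) : DependsOnly (fun s => P s ∧ Q s) (F₁ ∪ F₂) := fun e he s => by
  rw [Finset.mem_union, not_or] at he
  exact and_congr (hP e he.1 s) (hQ e he.2 s)

lemma dependsOnly_subset (F : Finset α) : DependsOnly (F ⊆ ·) F :=
  fun _ he _ => Finset.subset_insert_iff_of_notMem he

lemma dependsOnly_mem (e : α) : DependsOnly (e ∈ ·) {e} := by
  simpa only [Finset.singleton_subset_iff] using dependsOnly_subset {e}

lemma DependsOnly.forall_mem {I : Finset ι} {P : ι → Finset α → Prop} {F : ι → Finset α}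
    (h : ∀ i ∈ I, DependsOnly (P i) (F i)) :
    DependsOnly (fun s => ∀ i ∈ I, P i s) (I.biUnion F) := fun e he s =>
  forall₂_congr fun i hi => h i hi e (fun hei => he (Finset.mem_biUnion.2 ⟨i, hi, hei⟩)) s

lemma bernoulliProb_insert {e : α} (he : e ∉ E) (P : Finset α → Prop) :
    bernoulliProb p (insert e E) P =
      p * bernoulliProb p E (fun s => P (insert e s)) + (1 - p) * bernoulliProb p E P :=
  bernoulliExp_insert he _

lemma bernoulliProb_and {F₁ F₂ : Finset α} (hF : Disjoint F₁ F₂) {P Q : Finset α → Prop}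
    (hP : DependsOnly P F₁) (hQ : DependsOnly Q F₂) :
    bernoulliProb p E (fun s => P s ∧ Q s) = bernoulliProb p E P * bernoulliProb p E Q := by
  induction E using Finset.induction_on generalizing P Q with
  | empty =>
    simp only [bernoulliProb, bernoulliExp_empty]
    split_ifs <;> simp_all
  | insert e E he ih =>
    simp only [bernoulliProb_insert he, ih hP hQ, ih (hP.comp_insert e) (hQ.comp_insert e)]
    by_cases h₁ : e ∈ F₁
    · simp only [hQ e (Finset.disjoint_left.1 hF h₁)]
      ring
    · simp only [hP e h₁]
      ring

lemma bernoulliProb_forall {I : Finset ι} {F : ι → Finset α}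
    (hF : (I : Set ι).PairwiseDisjoint F) {P : ι → Finset α → Prop}
    (hP : ∀ i ∈ I, DependsOnly (P i) (F i)) :
    bernoulliProb p E (fun s => ∀ i ∈ I, P i s) = ∏ i ∈ I, bernoulliProb p E (P i) := by
  induction I using Finset.induction_on with
  | empty => simpa using bernoulliProb_true
  | insert a I ha ih =>
    rw [Finset.coe_insert, Set.pairwiseDisjoint_insert_of_notMem (Finset.mem_coe.not.2 ha)] at hF
    rw [Finset.forall_mem_insert] at hP
    simp only [Finset.forall_mem_insert, Finset.prod_insert ha]
    rw [← ih hF.1 hP.2]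
    exact bernoulliProb_and ((Finset.disjoint_biUnion_right _ _ _).2 hF.2) hP.1
      (DependsOnly.forall_mem hP.2)

end Independence

lemma bernoulliProb_mem {e : α} (he : e ∈ E) : bernoulliProb p E (e ∈ ·) = p := by
  rw [← Finset.insert_erase he, bernoulliProb_insert (Finset.notMem_erase e E)]
  have hnot : bernoulliProb p (E.erase e) (e ∈ ·) = 0 := Finset.sum_eq_zero fun s hs => by
    have : e ∉ s := fun h => Finset.notMem_erase e E (Finset.mem_powerset.1 hs h)
    simp only [this, if_false, mul_zero]
  have hinsert : bernoulliProb p (E.erase e) (fun s => e ∈ insert e s) = 1 := by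
    simpa only [Finset.mem_insert_self] using bernoulliProb_true
  rw [hnot, hinsert]
  ring

lemma bernoulliProb_subset {F : Finset α} (hF : F ⊆ E) :
    bernoulliProb p E (F ⊆ ·) = p ^ F.card := by
  have hdisj : (F : Set α).PairwiseDisjoint (singleton : α → Finset α) := fun _ _ _ _ hne =>
    Finset.disjoint_singleton.2 hne
  calc bernoulliProb p E (F ⊆ ·) = ∏ e ∈ F, bernoulliProb p E (e ∈ ·) :=
        bernoulliProb_forall hdisj fun e _ => dependsOnly_mem e
    _ = p ^ F.card := by
        rw [Finset.prod_congr rfl fun e he => bernoulliProb_mem (hF he), Finset.prod_const]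

lemma bernoulliProb_forall_not_subset_le (hp : p ∈ Set.Icc 0 1) {L : ℕ} {I : Finset ι}
    {F : ι → Finset α} (hF : (I : Set ι).PairwiseDisjoint F) (hFE : ∀ i ∈ I, F i ⊆ E)
    (hFL : ∀ i ∈ I, (F i).card ≤ L) :
    bernoulliProb p E (fun s => ∀ i ∈ I, ¬ F i ⊆ s) ≤ (1 - p ^ L) ^ I.card := by
  rw [bernoulliProb_forall hF fun i _ => (dependsOnly_subset (F i)).not, ← Finset.prod_const]
  refine Finset.prod_le_prod (fun i _ => bernoulliProb_nonneg hp _) fun i hi => ?_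
  rw [bernoulliProb_not, bernoulliProb_subset (hFE i hi)]
  exact sub_le_sub_left (pow_le_pow_of_le_one hp.1 hp.2 (hFL i hi)) 1

lemma exists_pairwiseDisjoint_of_forall_disjoint {L m : ℕ} {Q : Finset α → Prop}
    (h : ∀ F : Finset α, F.card ≤ m * L → ∃ P, Disjoint P F ∧ P.card ≤ L ∧ Q P) :
    ∃ f : ℕ → Finset α, (∀ i < m, (f i).card ≤ L ∧ Q (f i)) ∧
      (Finset.range m : Set ℕ).PairwiseDisjoint f := by
  induction m with
  | zero => exact ⟨fun _ => ∅, by simp, by simp⟩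
  | succ m ih =>
    obtain ⟨f, hf, hdisj⟩ := ih fun F hF => h F (hF.trans (Nat.mul_le_mul_right L m.le_succ))
    obtain ⟨P, hPF, hPL, hQ⟩ := h ((Finset.range m).biUnion f) <| by
      refine (Finset.card_biUnion_le_card_mul _ _ L fun i hi =>
        (hf i (Finset.mem_range.1 hi)).1).trans ?_
      rw [Finset.card_range]
      exact Nat.mul_le_mul_right L m.le_succ
    have hold : ∀ i < m, Function.update f m P i = f i := fun i hi =>
      Function.update_of_ne hi.ne _ _
    refine ⟨Function.update f m P, fun i hi => ?_, ?_⟩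
    · obtain hi | rfl := Nat.lt_succ_iff_lt_or_eq.1 hi
      · rw [hold i hi]
        exact hf i hi
      · rw [Function.update_self]
        exact ⟨hPL, hQ⟩
    · rw [Finset.range_add_one, Finset.coe_insert,
        Set.pairwiseDisjoint_insert_of_notMem (by simp)]
      refine ⟨fun i hi j hj hij => ?_, fun i hi => ?_⟩
      · have hi' := Finset.mem_range.1 hi
        have hj' := Finset.mem_range.1 hj
        rw [Function.onFun, hold i hi', hold j hj']
        exact hdisj hi hj hij
      · rw [Function.update_self, hold i (Finset.mem_range.1 hi)]
        exact (Finset.disjoint_biUnion_right _ _ _).1 hPF i hi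

section BoundedDifferences

lemma add_mul_exp_le_exp_add_sq (hp : p ∈ Set.Icc 0 1) (x y : ℝ) :
    p * Real.exp x + (1 - p) * Real.exp y ≤
      Real.exp (p * x + (1 - p) * y + (x - y) ^ 2 / 8) := by
  let μ := ProbabilityTheory.bernoulliMeasure true false ⟨p, hp⟩
  let X : Bool → ℝ := fun z => cond z x y
  have hX : ∀ z, X z ∈ Set.Icc (min x y) (max x y) := by simp [X]
  have hmgf := (ProbabilityTheory.hasSubgaussianMGF_of_mem_Icc (μ := μ)
    (measurable_of_finite X).aemeasurable (.of_forall hX)).mgf_le 1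
  simp only [ProbabilityTheory.mgf, μ, ProbabilityTheory.integral_bernoulliMeasure, X, cond_true,
    cond_false, smul_eq_mul, one_mul, Real.exp_sub, max_sub_min_eq_abs] at hmgf
  have hvar : (((‖|y - x|‖₊ / 2) ^ 2 : NNReal) : ℝ) * 1 ^ 2 / 2 = (x - y) ^ 2 / 8 := by
    push_cast
    rw [Real.norm_eq_abs, abs_abs, div_pow, sq_abs]
    ring
  rw [hvar, mul_div_assoc', mul_div_assoc', ← add_div, div_le_iff₀ (Real.exp_pos _)] at hmgf
  rwa [add_comm _ ((x - y) ^ 2 / 8), Real.exp_add]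

variable [DecidableEq α]

lemma bernoulliExp_exp_le (hp : p ∈ Set.Icc 0 1) {K : ℝ} {f : Finset α → ℝ}
    (hf : ∀ e s, |f (insert e s) - f s| ≤ K) :
    bernoulliExp p E (fun s => Real.exp (f s)) ≤
      Real.exp (bernoulliExp p E f + E.card * K ^ 2 / 8) := by
  induction E using Finset.induction_on generalizing f with
  | empty => simp [bernoulliExp_empty]
  | insert e E he ih =>
    have hfe := ih (f := fun s => f (insert e s)) fun a s => by
      simpa only [Finset.insert_comm] using hf a (insert e s)
    have hdiff : (bernoulliExp p E (fun s => f (insert e s)) - bernoulliExp p E f) ^ 2 ≤ K ^ 2 := by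
      rw [sub_eq_add_neg, ← neg_one_mul, ← bernoulliExp_const_mul, ← bernoulliExp_add]
      refine sq_le_sq' ?_ ?_
      · exact (bernoulliExp_const (-K)).symm.trans_le
          (bernoulliExp_mono hp fun s _ => by linarith [(abs_le.1 (hf e s)).1])
      · exact (bernoulliExp_mono hp fun s _ => by linarith [(abs_le.1 (hf e s)).2]).trans_eq
          (bernoulliExp_const K)
    rw [bernoulliExp_insert he, bernoulliExp_insert he]
    refine (add_le_add (mul_le_mul_of_nonneg_left hfe hp.1)
      (mul_le_mul_of_nonneg_left (ih hf) (sub_nonneg.2 hp.2))).trans ?_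
    refine (add_mul_exp_le_exp_add_sq hp _ _).trans (Real.exp_le_exp.2 ?_)
    rw [Finset.card_insert_of_notMem he]
    push_cast
    linarith

lemma bernoulliProb_upper_tail (hp : p ∈ Set.Icc 0 1) {K M a : ℝ} {f : Finset α → ℝ}
    (hf : ∀ e s, |f (insert e s) - f s| ≤ K) (hM : 0 < M) (hEM : E.card * K ^ 2 ≤ M)
    (ha : 0 ≤ a) :
    bernoulliProb p E (fun s => bernoulliExp p E f + a ≤ f s) ≤ Real.exp (-(2 * a ^ 2 / M)) := by
  set m := bernoulliExp p E f
  let l := 4 * a / M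
  have hl : 0 ≤ l := by positivity
  have hlf : ∀ e s, |l * f (insert e s) - l * f s| ≤ l * K := fun e s => by
    rw [← mul_sub, abs_mul, abs_of_nonneg hl]
    exact mul_le_mul_of_nonneg_left (hf e s) hl
  calc bernoulliProb p E (fun s => m + a ≤ f s)
      ≤ bernoulliExp p E (fun s => Real.exp (-(l * (m + a))) * Real.exp (l * f s)) := by
        refine bernoulliProb_le_bernoulliExp hp (fun s => by positivity) fun s hs => ?_
        rw [← Real.exp_add, Real.one_le_exp_iff]
        linarith [mul_le_mul_of_nonneg_left hs hl]
    _ ≤ Real.exp (-(l * (m + a))) * Real.exp (l * m + E.card * (l * K) ^ 2 / 8) := by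
        rw [bernoulliExp_const_mul, ← bernoulliExp_const_mul l]
        exact mul_le_mul_of_nonneg_left (bernoulliExp_exp_le hp hlf) (Real.exp_pos _).le
    _ = Real.exp (E.card * K ^ 2 * l ^ 2 / 8 - l * a) := by
        rw [← Real.exp_add]
        ring_nf
    _ ≤ Real.exp (M * l ^ 2 / 8 - l * a) := by gcongr
    _ = Real.exp (-(2 * a ^ 2 / M)) := by
        congr 1
        simp only [l]
        field_simp
        ring

lemma bernoulliProb_lower_tail (hp : p ∈ Set.Icc 0 1) {K M a : ℝ} {f : Finset α → ℝ}
    (hf : ∀ e s, |f (insert e s) - f s| ≤ K) (hM : 0 < M) (hEM : E.card * K ^ 2 ≤ M)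
    (ha : 0 ≤ a) :
    bernoulliProb p E (fun s => f s ≤ bernoulliExp p E f - a) ≤ Real.exp (-(2 * a ^ 2 / M)) := by
  have hneg : ∀ e s, |-1 * f (insert e s) - -1 * f s| ≤ K := fun e s => by
    rw [← mul_sub, abs_mul, abs_neg, abs_one, one_mul]
    exact hf e s
  refine le_trans (bernoulliProb_mono hp fun s _ hs => ?_)
    (bernoulliProb_upper_tail (f := fun s => -1 * f s) hp hneg hM hEM ha)
  rw [bernoulliExp_const_mul]
  linarith

end BoundedDifferences

end BernoulliSubset

section ShortWalks

variable {V : Type*} {G : SimpleGraph V} {v x : V}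

lemma isAcyclic_fromEdgeSet_of_card_lt_girth {T : Finset (Sym2 V)}
    (hT : (T : Set (Sym2 V)) ⊆ G.edgeSet) (hcard : T.card < G.girth) :
    (SimpleGraph.fromEdgeSet (T : Set (Sym2 V))).IsAcyclic := by
  intro a c hc
  have hle : SimpleGraph.fromEdgeSet (T : Set (Sym2 V)) ≤ G := fun x y h =>
    hT ((SimpleGraph.fromEdgeSet_adj _).1 h).1
  have hgirth := SimpleGraph.girth_le_length (hc.mapLe hle)
  rw [SimpleGraph.Walk.length_map, ← SimpleGraph.Walk.length_edges,
    ← List.toFinset_card_of_nodup hc.isTrail.edges_nodup] at hgirth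
  have hcT : c.edges.toFinset ⊆ T := fun e he => by
    have := c.edges_subset_edgeSet (List.mem_toFinset.1 he)
    rw [SimpleGraph.edgeSet_fromEdgeSet] at this
    exact Finset.mem_coe.1 this.1
  exact ((Finset.card_le_card hcT).trans_lt hcard).not_ge hgirth

lemma edges_subset_edgeSet_fromEdgeSet {T : Set (Sym2 V)} (q : G.Walk v x)
    (hq : ∀ e ∈ q.edges, e ∈ T) : ∀ e ∈ q.edges, e ∈ (SimpleGraph.fromEdgeSet T).edgeSet :=
  fun e he => by
    rw [SimpleGraph.edgeSet_fromEdgeSet]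
    exact ⟨hq e he, G.not_isDiag_of_mem_edgeSet (q.edges_subset_edgeSet he)⟩

lemma isPath_of_isChain_edges (q : G.Walk v x) (hq : q.edges.IsChain (· ≠ ·))
    (hlen : q.length < G.girth) : q.IsPath := by
  have hT : (q.edges.toFinset : Set (Sym2 V)) ⊆ G.edgeSet := fun e he =>
    q.edges_subset_edgeSet (List.mem_toFinset.1 he)
  have hac := isAcyclic_fromEdgeSet_of_card_lt_girth hT
    ((List.toFinset_card_le _).trans_lt (by rwa [q.length_edges]))
  have hpath := (hac.isPath_iff_isChain (q.transfer _
    (edges_subset_edgeSet_fromEdgeSet q fun e he => List.mem_toFinset.2 he))).2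
    (by rwa [q.edges_transfer])
  rwa [SimpleGraph.Walk.isPath_def, SimpleGraph.Walk.support_transfer,
    ← SimpleGraph.Walk.isPath_def] at hpath

lemma eq_of_isChain_edges (q r : G.Walk v x) (hq : q.edges.IsChain (· ≠ ·))
    (hr : r.edges.IsChain (· ≠ ·)) (hlen : q.length + r.length < G.girth) : q = r := by
  set T : Finset (Sym2 V) := (q.edges ++ r.edges).toFinset
  have hqT : ∀ e ∈ q.edges, e ∈ T := fun e he => List.mem_toFinset.2 (List.mem_append_left _ he)
  have hrT : ∀ e ∈ r.edges, e ∈ T := fun e he => List.mem_toFinset.2 (List.mem_append_right _ he)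
  have hT : (T : Set (Sym2 V)) ⊆ G.edgeSet := fun e he =>
    (List.mem_append.1 (List.mem_toFinset.1 he)).elim (q.edges_subset_edgeSet ·)
      (r.edges_subset_edgeSet ·)
  have hac := isAcyclic_fromEdgeSet_of_card_lt_girth hT
    ((List.toFinset_card_le _).trans_lt (by simpa using hlen))
  have hqpath := (hac.isPath_iff_isChain (q.transfer _
    (edges_subset_edgeSet_fromEdgeSet q hqT))).2 (by rwa [q.edges_transfer])
  have hrpath := (hac.isPath_iff_isChain (r.transfer _
    (edges_subset_edgeSet_fromEdgeSet r hrT))).2 (by rwa [r.edges_transfer])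
  have heq := congrArg (fun P => P.1.support)
    ((hac.subsingleton_path v x).elim ⟨_, hqpath⟩ ⟨_, hrpath⟩)
  simp only [SimpleGraph.Walk.support_transfer] at heq
  exact SimpleGraph.Walk.ext_support heq

lemma exists_adj_of_girth_pos (h : 0 < G.girth) : ∃ a b, G.Adj a b :=
  SimpleGraph.ne_bot_iff_exists_adj.1 fun hG =>
    h.ne' (SimpleGraph.girth_eq_zero.2 (hG ▸ SimpleGraph.isAcyclic_bot))

end ShortWalks

section Branches

variable {V : Type} [Fintype V] {G : SimpleGraph V} {d k : ℕ} {p : ℝ}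

lemma mem_edgeFinset' {e : Sym2 V} : e ∈ edgeFinset' G ↔ e ∈ G.edgeSet := by
  simp [edgeFinset']

lemma two_mul_card_edgeFinset' : 2 * (edgeFinset' G).card = ∑ v, G.degree v := by
  rw [G.sum_degrees_eq_twice_card_edges]
  congr 2
  ext e
  rw [mem_edgeFinset', SimpleGraph.mem_edgeFinset]

/-- The neighbours of `v` other than `u`: the vertices to which a non-backtracking walk arriving at
`v` from `u` may proceed. -/
def nextVerts (G : SimpleGraph V) (u v : V) : Finset V :=
  (G.neighborFinset v).erase u

lemma mem_nextVerts {u v w : V} : w ∈ nextVerts G u v ↔ w ≠ u ∧ G.Adj v w := by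
  rw [nextVerts, Finset.mem_erase, SimpleGraph.mem_neighborFinset]

lemma card_nextVerts {u v : V} (huv : G.Adj u v) : (nextVerts G u v).card = G.degree v - 1 :=
  Finset.card_erase_of_mem ((G.mem_neighborFinset v u).2 huv.symm)

/-- Some non-backtracking walk of length `k` from `v`, whose first step does not lead to `u`, uses
only edges in `s`. -/
def LongBranch (G : SimpleGraph V) (s : Finset (Sym2 V)) : ℕ → V → V → Prop
  | 0, _, _ => True
  | k + 1, u, v => ∃ w ∈ nextVerts G u v, s(v, w) ∈ s ∧ LongBranch G s k v w

/-- The edges within distance `k` of `v` that are reached from `v` without passing through `u`; the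
event `LongBranch G s k u v` depends only on these. -/
def branchEdges (G : SimpleGraph V) : ℕ → V → V → Finset (Sym2 V)
  | 0, _, _ => ∅
  | k + 1, u, v => (nextVerts G u v).biUnion fun w => insert s(v, w) (branchEdges G k v w)

lemma LongBranch.mono {s t : Finset (Sym2 V)} (hst : s ⊆ t) {u v : V}
    (h : LongBranch G s k u v) : LongBranch G t k u v := by
  induction k generalizing u v with
  | zero => trivial
  | succ k ih =>
    obtain ⟨w, hw, hs, hl⟩ := h
    exact ⟨w, hw, hst hs, ih hl⟩

lemma dependsOnly_longBranch (u v : V) :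
    DependsOnly (fun s => LongBranch G s k u v) (branchEdges G k u v) := by
  induction k generalizing u v with
  | zero => exact fun _ _ _ => Iff.rfl
  | succ k ih =>
    intro e he s
    refine exists_congr fun w => and_congr_right fun hw => ?_
    have hew : e ∉ insert s(v, w) (branchEdges G k v w) := fun h =>
      he (Finset.mem_biUnion.2 ⟨w, hw, h⟩)
    rw [Finset.mem_insert, not_or] at hew
    exact and_congr (dependsOnly_mem _ e (Finset.notMem_singleton.2 hew.1) s) (ih v w e hew.2 s)

lemma branchEdges_subset (u v : V) : branchEdges G k u v ⊆ edgeFinset' G := by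
  induction k generalizing u v with
  | zero => exact Finset.empty_subset _
  | succ k ih =>
    exact Finset.biUnion_subset.2 fun w hw =>
      Finset.insert_subset (mem_edgeFinset'.2 (mem_nextVerts.1 hw).2) (ih v w)

lemma exists_walk_of_mem_branchEdges {v w : V} (hvw : G.Adj v w) {e : Sym2 V}
    (he : e ∈ insert s(v, w) (branchEdges G k v w)) :
    ∃ (x y : V) (q : G.Walk v x) (h : G.Adj x y), e = s(x, y) ∧
      (q.concat h).edges.IsChain (· ≠ ·) ∧ q.length ≤ k ∧
      (q.concat h).edges.head? = some s(v, w) := by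
  induction k generalizing v w with
  | zero =>
    obtain rfl : e = s(v, w) := by simpa [branchEdges] using he
    exact ⟨v, w, .nil, hvw, rfl, by simp [SimpleGraph.Walk.concat], by simp,
      by simp [SimpleGraph.Walk.concat]⟩
  | succ k ih =>
    rcases Finset.mem_insert.1 he with rfl | he
    · exact ⟨v, w, .nil, hvw, rfl, by simp [SimpleGraph.Walk.concat], by simp,
        by simp [SimpleGraph.Walk.concat]⟩
    · obtain ⟨z, hz, he⟩ := Finset.mem_biUnion.1 he
      obtain ⟨hzv, hwz⟩ := mem_nextVerts.1 hz
      obtain ⟨x, y, q, h, hexy, hchain, hlen, hhead⟩ := ih hwz he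
      refine ⟨x, y, .cons hvw q, h, hexy, ?_, by simpa using hlen,
        by simp [SimpleGraph.Walk.concat_cons]⟩
      rw [SimpleGraph.Walk.concat_cons, SimpleGraph.Walk.edges_cons, List.isChain_cons, hhead]
      refine ⟨fun a ha => ?_, hchain⟩
      obtain rfl : s(w, z) = a := by simpa using ha
      rw [Sym2.eq_swap, Ne, Sym2.congr_right]
      exact hzv.symm

/-- If the two branches shared an edge, its two ends would give distinct short non-backtracking
walks, or one that uses that edge twice in succession. -/
lemma disjoint_branchEdges (hk : 2 * k + 2 < G.girth) {v w z : V} (hw : G.Adj v w)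
    (hz : G.Adj v z) (hne : w ≠ z) :
    Disjoint (insert s(v, w) (branchEdges G k v w)) (insert s(v, z) (branchEdges G k v z)) := by
  rw [Finset.disjoint_left]
  intro e hew hez
  obtain ⟨x, y, q, hxy, rfl, hq, hqlen, hqhead⟩ := exists_walk_of_mem_branchEdges hw hew
  obtain ⟨a, b, r, hab, heq, hr, hrlen, hrhead⟩ := exists_walk_of_mem_branchEdges hz hez
  rcases Sym2.eq_iff.1 heq with ⟨rfl, rfl⟩ | ⟨rfl, rfl⟩
  · rw [eq_of_isChain_edges _ _ hq hr (by simp; omega), hrhead, Option.some.injEq,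
      Sym2.congr_right] at hqhead
    exact hne hqhead.symm
  · rw [SimpleGraph.Walk.edges_concat, List.concat_eq_append] at hq
    have hqr := eq_of_isChain_edges q _ (List.isChain_append.1 hq).1 hr (by simp; omega)
    rw [hqr, SimpleGraph.Walk.edges_concat, List.concat_eq_append, List.append_assoc] at hq
    simpa [Sym2.eq_swap] using (List.isChain_append.1 hq).2.1

lemma pairwiseDisjoint_branchEdges (hk : 2 * (k + 1) < G.girth) (u v : V) :
    (nextVerts G u v : Set V).PairwiseDisjoint fun w => insert s(v, w) (branchEdges G k v w) :=
  fun _ hw _ hz hne =>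
    disjoint_branchEdges hk (mem_nextVerts.1 hw).2 (mem_nextVerts.1 hz).2 hne

lemma notMem_branchEdges (hk : 2 * k < G.girth) {v w : V} (hvw : G.Adj v w) :
    s(v, w) ∉ branchEdges G k v w := by
  cases k with
  | zero => exact Finset.notMem_empty _
  | succ k =>
    intro h
    obtain ⟨z, hz, he⟩ := Finset.mem_biUnion.1 h
    obtain ⟨hzv, hwz⟩ := mem_nextVerts.1 hz
    refine Finset.disjoint_left.1 (disjoint_branchEdges hk hwz hvw.symm hzv) he ?_
    rw [Sym2.eq_swap]
    exact Finset.mem_insert_self _ _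

/-- The probability that a branching process with `Binomial(m, p)` offspring reaches
generation `k`. -/
def survival (p : ℝ) (m : ℕ) : ℕ → ℝ
  | 0 => 1
  | k + 1 => 1 - (1 - p * survival p m k) ^ m

lemma bernoulliProb_longBranch (hd : G.IsRegularOfDegree d) (hk : 2 * k < G.girth) {u v : V}
    (huv : G.Adj u v) :
    bernoulliProb p (edgeFinset' G) (fun s => LongBranch G s k u v) = survival p (d - 1) k := by
  induction k generalizing u v with
  | zero => exact bernoulliProb_true
  | succ k ih =>
    have hstep : ∀ w ∈ nextVerts G u v, bernoulliProb p (edgeFinset' G)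
        (fun s => ¬ (s(v, w) ∈ s ∧ LongBranch G s k v w)) = 1 - p * survival p (d - 1) k := by
      intro w hw
      have hvw := (mem_nextVerts.1 hw).2
      rw [bernoulliProb_not,
        bernoulliProb_and _ (dependsOnly_mem s(v, w)) (dependsOnly_longBranch v w),
        bernoulliProb_mem (mem_edgeFinset'.2 hvw), ih (by omega) hvw]
      exact Finset.disjoint_singleton_left.2 (notMem_branchEdges (by omega) hvw)
    have hdep : ∀ w ∈ nextVerts G u v, DependsOnly
        (fun s => ¬ (s(v, w) ∈ s ∧ LongBranch G s k v w)) (insert s(v, w) (branchEdges G k v w)) :=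
      fun w _ => ((dependsOnly_mem s(v, w)).and (dependsOnly_longBranch v w)).not
    calc _ = 1 - bernoulliProb p (edgeFinset' G)
          (fun s => ∀ w ∈ nextVerts G u v, ¬ (s(v, w) ∈ s ∧ LongBranch G s k v w)) := by
          simp only [← bernoulliProb_not, not_forall, not_not, LongBranch, exists_prop]
      _ = 1 - ∏ w ∈ nextVerts G u v, (1 - p * survival p (d - 1) k) := by
          rw [bernoulliProb_forall (pairwiseDisjoint_branchEdges hk u v) hdep,
            Finset.prod_congr rfl hstep]
      _ = survival p (d - 1) (k + 1) := by
          rw [Finset.prod_const, card_nextVerts huv, hd v, survival]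

lemma card_branchEdges (hd : G.IsRegularOfDegree d) (hk : 2 * k < G.girth) {u v : V}
    (huv : G.Adj u v) :
    (branchEdges G k u v).card = ∑ i ∈ Finset.range k, (d - 1) ^ (i + 1) := by
  induction k generalizing u v with
  | zero => rfl
  | succ k ih =>
    have hcard : ∀ w ∈ nextVerts G u v, (insert s(v, w) (branchEdges G k v w)).card =
        ∑ i ∈ Finset.range (k + 1), (d - 1) ^ i := fun w hw => by
      have hvw := (mem_nextVerts.1 hw).2
      rw [Finset.card_insert_of_notMem (notMem_branchEdges (by omega) hvw), ih (by omega) hvw,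
        Finset.sum_range_succ', pow_zero]
    rw [branchEdges, Finset.card_biUnion (pairwiseDisjoint_branchEdges hk u v),
      Finset.sum_congr rfl hcard, Finset.sum_const, card_nextVerts huv, hd v, smul_eq_mul,
      Finset.mul_sum]
    simp only [pow_succ']

lemma pow_le_card_edgeFinset' (hd : G.IsRegularOfDegree d) (hk : 0 < k) (hg : 2 * k < G.girth) :
    (d - 1) ^ k ≤ (edgeFinset' G).card := by
  obtain ⟨u, v, huv⟩ := exists_adj_of_girth_pos (G := G) (by omega)
  obtain ⟨j, rfl⟩ := Nat.exists_eq_succ_of_ne_zero hk.ne'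
  calc (d - 1) ^ (j + 1) ≤ ∑ i ∈ Finset.range (j + 1), (d - 1) ^ (i + 1) :=
        Finset.single_le_sum (f := fun i => (d - 1) ^ (i + 1)) (fun _ _ => Nat.zero_le _)
          (Finset.self_mem_range_succ j)
    _ = (branchEdges G (j + 1) u v).card := (card_branchEdges hd hg huv).symm
    _ ≤ (edgeFinset' G).card := Finset.card_le_card (branchEdges_subset u v)

lemma card_edgeFinset'_le (hd : ∀ v, G.degree v ≤ d) :
    (edgeFinset' G).card ≤ d * Fintype.card V := by
  have hsum := Finset.sum_le_card_nsmul Finset.univ (fun v => G.degree v) d fun v _ => hd v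
  rw [← two_mul_card_edgeFinset', Finset.card_univ, smul_eq_mul, mul_comm _ d] at hsum
  omega

end Branches

lemma eventually_mul_le_card {d : ℕ} (hd : 3 ≤ d) {C : ℝ} (hC : 0 < C) :
    ∀ᶠ R : ℕ in Filter.atTop, ∀ (V : Type) [Fintype V] (G : SimpleGraph V),
      G.IsRegularOfDegree d → 2 * R < G.girth → C * R ≤ Fintype.card V := by
  have hbase : (1 : ℝ) < (d - 1 : ℕ) := by exact_mod_cast (by omega : 1 < d - 1)
  have hd0 : (0 : ℝ) < d := by positivity
  filter_upwards [(isLittleO_coe_const_pow_of_one_lt (R := ℝ) hbase).def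
    (c := 1 / (C * d)) (by positivity), Filter.eventually_gt_atTop 0] with R hpow hR V _ G hG hg
  have hcard : ((d - 1 : ℕ) : ℝ) ^ R ≤ d * Fintype.card V := by
    exact_mod_cast (pow_le_card_edgeFinset' hG hR hg).trans
      (card_edgeFinset'_le fun v => (hG v).le)
  rw [Real.norm_natCast, Real.norm_of_nonneg (by positivity), div_mul_eq_mul_div, one_mul,
    le_div_iff₀ (by positivity)] at hpow
  nlinarith

section Concentration

variable {V : Type} [Fintype V] {G : SimpleGraph V} {d k : ℕ} {p : ℝ}

lemma card_darts_snd_mem_le (hd : ∀ v, G.degree v ≤ d) (S : Finset V) :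
    ({a | a.snd ∈ S} : Finset G.Dart).card ≤ d * S.card := by
  refine Finset.card_le_mul_card_image_of_maps_to (f := fun a : G.Dart => a.snd)
    (fun a ha => (Finset.mem_filter.1 ha).2) d fun v _ => ?_
  refine le_trans ?_ (hd v)
  rw [← G.dart_fst_fiber_card_eq_degree v]
  refine Finset.card_le_card_of_injOn SimpleGraph.Dart.symm (fun a ha => ?_)
    SimpleGraph.Dart.symm_involutive.injective.injOn
  simpa using (Finset.mem_filter.1 ha).2

/-- The number of darts `(u, v)` such that some open non-backtracking walk of length `k` from `v`
does not start towards `u`. -/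
def numLong (G : SimpleGraph V) (k : ℕ) (s : Finset (Sym2 V)) : ℝ :=
  ∑ a : G.Dart, if LongBranch G s k a.fst a.snd then 1 else 0

lemma bernoulliExp_numLong (hd : G.IsRegularOfDegree d) (hk : 2 * k < G.girth) :
    bernoulliExp p (edgeFinset' G) (numLong G k) =
      d * Fintype.card V * survival p (d - 1) k := by
  calc bernoulliExp p (edgeFinset' G) (numLong G k)
      = ∑ a : G.Dart, bernoulliProb p (edgeFinset' G)
          (fun s => LongBranch G s k a.fst a.snd) := bernoulliExp_sum _ _
    _ = ∑ _a : G.Dart, survival p (d - 1) k :=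
        Finset.sum_congr rfl fun a _ => bernoulliProb_longBranch hd hk a.adj
    _ = d * Fintype.card V * survival p (d - 1) k := by
        rw [Finset.sum_const, Finset.card_univ, G.dart_card_eq_sum_degrees,
          Finset.sum_congr rfl fun v _ => hd v]
        simp [mul_comm]

lemma card_darts_mem_branchEdges_le (hd : ∀ v, G.degree v ≤ d) (e : Sym2 V) :
    ({a | e ∈ branchEdges G k a.fst a.snd} : Finset G.Dart).card ≤
      2 * d * ∑ i ∈ Finset.range k, d ^ i := by
  induction k with
  | zero => simp [branchEdges]
  | succ k ih =>
    let S : Finset V := e.toFinset ∪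
      ({a | e ∈ branchEdges G k a.fst a.snd} : Finset G.Dart).image (·.fst)
    have hsub : ({a | e ∈ branchEdges G (k + 1) a.fst a.snd} : Finset G.Dart) ⊆
        ({a | a.snd ∈ S} : Finset G.Dart) := fun a ha => by
      refine Finset.mem_filter.2 ⟨Finset.mem_univ a, ?_⟩
      obtain ⟨w, hw, he⟩ := Finset.mem_biUnion.1 (Finset.mem_filter.1 ha).2
      rcases Finset.mem_insert.1 he with rfl | he
      · simp [S]
      · refine Finset.mem_union_right _ (Finset.mem_image.2 ⟨⟨(a.snd, w), ?_⟩, ?_, rfl⟩)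
        · exact (mem_nextVerts.1 hw).2
        · exact Finset.mem_filter.2 ⟨Finset.mem_univ _, he⟩
    have htwo : e.toFinset.card ≤ 2 := by
      rw [e.card_toFinset]
      split_ifs <;> omega
    have hcard : S.card ≤ 2 + 2 * d * ∑ i ∈ Finset.range k, d ^ i :=
      (Finset.card_union_le _ _).trans
        (add_le_add htwo (Finset.card_image_le.trans ih))
    calc _ ≤ d * S.card := (Finset.card_le_card hsub).trans (card_darts_snd_mem_le hd S)
      _ ≤ d * (2 + 2 * d * ∑ i ∈ Finset.range k, d ^ i) := Nat.mul_le_mul_left d hcard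
      _ = 2 * d * ∑ i ∈ Finset.range (k + 1), d ^ i := by
          rw [geom_sum_succ]
          ring

lemma abs_numLong_insert_sub_le (hd : ∀ v, G.degree v ≤ d) (e : Sym2 V) (s : Finset (Sym2 V)) :
    |numLong G k (insert e s) - numLong G k s| ≤
      (2 * d * ∑ i ∈ Finset.range k, d ^ i : ℕ) := by
  rw [numLong, numLong, ← Finset.sum_sub_distrib]
  calc _ ≤ ∑ a : G.Dart, if e ∈ branchEdges G k a.fst a.snd then (1 : ℝ) else 0 := by
        refine (Finset.abs_sum_le_sum_abs _ _).trans (Finset.sum_le_sum fun a _ => ?_)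
        by_cases he : e ∈ branchEdges G k a.fst a.snd
        · rw [if_pos he]
          split_ifs <;> simp
        · simp only [dependsOnly_longBranch a.fst a.snd e he s, sub_self, abs_zero, he, if_false,
            le_refl]
    _ = ({a | e ∈ branchEdges G k a.fst a.snd} : Finset G.Dart).card :=
        Finset.sum_boole _ _
    _ ≤ _ := by exact_mod_cast card_darts_mem_branchEdges_le hd e

end Concentration

lemma exists_numLong_tails {d : ℕ} (hd : 0 < d) (k : ℕ) {δ : ℝ} (hδ : 0 < δ) :
    ∃ c > (0 : ℝ), ∀ p ∈ Set.Icc (0 : ℝ) 1, ∀ (V : Type) [Fintype V] (G : SimpleGraph V),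
      G.IsRegularOfDegree d → 2 * k < G.girth →
      bernoulliProb p (edgeFinset' G) (fun s => d * Fintype.card V * survival p (d - 1) k +
        δ * Fintype.card V ≤ numLong G k s) ≤ Real.exp (-c * Fintype.card V) ∧
      bernoulliProb p (edgeFinset' G) (fun s => numLong G k s ≤
        d * Fintype.card V * survival p (d - 1) k - δ * Fintype.card V) ≤
          Real.exp (-c * Fintype.card V) := by
  set K : ℕ := 2 * d * ∑ i ∈ Finset.range k, d ^ i
  refine ⟨2 * δ ^ 2 / (d * (K ^ 2 + 1)), by positivity, fun p hp V _ G hG hk => ?_⟩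
  have hdeg : ∀ v, G.degree v ≤ d := fun v => (hG v).le
  have hn : (0 : ℝ) < Fintype.card V := by
    obtain ⟨v, -⟩ := exists_adj_of_girth_pos (G := G) (by omega)
    exact_mod_cast Fintype.card_pos_iff.2 ⟨v⟩
  have hvar : ((edgeFinset' G).card : ℝ) * K ^ 2 ≤ d * (K ^ 2 + 1) * Fintype.card V := by
    have : ((edgeFinset' G).card : ℝ) ≤ d * Fintype.card V := by
      exact_mod_cast card_edgeFinset'_le hdeg
    nlinarith [mul_le_mul_of_nonneg_right this (sq_nonneg (K : ℝ))]
  have hexp : -(2 * (δ * Fintype.card V) ^ 2 / (d * (K ^ 2 + 1) * Fintype.card V : ℝ)) =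
      -(2 * δ ^ 2 / (d * (K ^ 2 + 1))) * Fintype.card V := by
    field_simp
  rw [← hexp, ← bernoulliExp_numLong hG hk]
  exact ⟨bernoulliProb_upper_tail hp (abs_numLong_insert_sub_le hdeg) (by positivity) hvar
      (by positivity),
    bernoulliProb_lower_tail hp (abs_numLong_insert_sub_le hdeg) (by positivity) hvar
      (by positivity)⟩

section Survival

open Filter Topology

variable {p q x δ : ℝ} {m k : ℕ}

lemma survival_mem_Icc (hp : p ∈ Set.Icc 0 1) : survival p m k ∈ Set.Icc 0 1 := by
  induction k with
  | zero => exact ⟨zero_le_one, le_rfl⟩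
  | succ k ih =>
    have h := unitInterval.mul_mem hp ih
    exact ⟨sub_nonneg.2 (pow_le_one₀ (sub_nonneg.2 h.2) (sub_le_self _ h.1)),
      sub_le_self _ (pow_nonneg (sub_nonneg.2 h.2) m)⟩

lemma one_sub_pow_le_survival_succ (hp : p ∈ Set.Icc 0 1) (hx : x ≤ survival p m k) :
    1 - (1 - p * x) ^ m ≤ survival p m (k + 1) :=
  sub_le_sub_left (pow_le_pow_left₀
    (sub_nonneg.2 (unitInterval.mul_mem hp (survival_mem_Icc hp)).2)
    (sub_le_sub_left (mul_le_mul_of_nonneg_left hx hp.1) 1) m) 1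

lemma survival_antitone (hp : p ∈ Set.Icc 0 1) : Antitone (survival p m) := by
  refine antitone_nat_of_succ_le fun k => ?_
  induction k with
  | zero => exact (survival_mem_Icc hp).2
  | succ k ih => exact one_sub_pow_le_survival_succ hp ih

lemma lt_one_sub_pow_of_lt_fixed_point (hm : 2 ≤ m) (hp : 0 < p) (hp1 : p ≤ 1) (hx : 0 < x)
    (hxq : x < q) (hq1 : q ≤ 1) (hq : q = 1 - (1 - p * q) ^ m) : x < 1 - (1 - p * x) ^ m := by
  have hq0 : 0 < q := hx.trans hxq
  have hpq : 0 ≤ 1 - p * q := by nlinarith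
  have hne : (1 : ℝ) ≠ 1 - p * q := by nlinarith
  have hconv := (strictConvexOn_pow hm).2 (Set.mem_Ici.2 zero_le_one) hpq hne
    (sub_pos.2 ((div_lt_one hq0).2 hxq)) (div_pos hx hq0) (sub_add_cancel _ _)
  have hpoint : (1 - x / q) • (1 : ℝ) + (x / q) • (1 - p * q) = 1 - p * x := by
    simp only [smul_eq_mul]
    field_simp
    ring
  have hvalue : (1 - x / q) • (1 : ℝ) ^ m + (x / q) • (1 - p * q) ^ m = 1 - x := by
    rw [show (1 - p * q) ^ m = 1 - q by linarith, one_pow]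
    simp only [smul_eq_mul]
    field_simp
    ring
  rw [hpoint, hvalue] at hconv
  linarith

lemma exists_lt_forall_le_survival (hm : 2 ≤ m) (hp : 0 < p) (hp1 : p ≤ 1) (hx : 0 < x)
    (hxq : x < q) (hq1 : q ≤ 1) (hq : q = 1 - (1 - p * q) ^ m) :
    ∃ p₁, 0 ≤ p₁ ∧ p₁ < p ∧ ∀ k, x ≤ survival p₁ m k := by
  have hcont : Continuous fun r : ℝ => 1 - (1 - r * x) ^ m := by fun_prop
  have hstep : ∀ᶠ r in 𝓝[<] p, x < 1 - (1 - r * x) ^ m :=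
    nhdsWithin_le_nhds <| (hcont.tendsto p).eventually <|
      lt_mem_nhds (lt_one_sub_pow_of_lt_fixed_point hm hp hp1 hx hxq hq1 hq)
  have hpos : ∀ᶠ r in 𝓝[<] p, 0 < r := nhdsWithin_le_nhds (lt_mem_nhds hp)
  obtain ⟨r, hr, hr0, hrp : r < p⟩ := (hstep.and (hpos.and self_mem_nhdsWithin)).exists
  refine ⟨r, hr0.le, hrp, fun k => ?_⟩
  induction k with
  | zero => exact (hxq.trans_le hq1).le
  | succ k ih => exact hr.le.trans (one_sub_pow_le_survival_succ ⟨hr0.le, hrp.le.trans hp1⟩ ih)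

lemma exists_tendsto_survival (hp : p ∈ Set.Icc 0 1) :
    ∃ q ≤ 1, q = 1 - (1 - p * q) ^ m ∧ Tendsto (survival p m) atTop (𝓝 q) := by
  obtain ⟨q, hlim⟩ : ∃ q, Tendsto (survival p m) atTop (𝓝 q) :=
    ⟨_, tendsto_atTop_ciInf (survival_antitone hp)
      ⟨0, by rintro _ ⟨k, rfl⟩; exact (survival_mem_Icc hp).1⟩⟩
  have hcont : Continuous fun r : ℝ => 1 - (1 - p * r) ^ m := by fun_prop
  exact ⟨q, le_of_tendsto' hlim fun k => (survival_mem_Icc hp).2,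
    tendsto_nhds_unique (hlim.comp (tendsto_add_atTop_nat 1)) ((hcont.tendsto q).comp hlim), hlim⟩

/- Strict convexity makes every `x` below the fixed point `q = lim survival p m k` satisfy
`x < 1 - (1 - p₁ * x) ^ m` for `p₁` slightly below `p`, so `x` bounds all `survival p₁ m k`. -/
lemma exists_lt_eventually_survival_sub_le (hm : 2 ≤ m) (hp : 0 < p) (hp1 : p ≤ 1) (hδ : 0 < δ) :
    ∃ p₁, 0 ≤ p₁ ∧ p₁ < p ∧ ∀ᶠ k in atTop, survival p m k - survival p₁ m k ≤ δ := by
  obtain ⟨q, hq1, hq, hlim⟩ := exists_tendsto_survival (m := m) ⟨hp.le, hp1⟩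
  obtain ⟨p₁, hp₁, hp₁p, hlow⟩ :
      ∃ p₁, 0 ≤ p₁ ∧ p₁ < p ∧ ∀ k, q - δ / 2 ≤ survival p₁ m k := by
    rcases le_or_gt (q - δ / 2) 0 with hqδ | hqδ
    · exact ⟨0, le_rfl, hp, fun k => hqδ.trans (survival_mem_Icc ⟨le_rfl, zero_le_one⟩).1⟩
    · exact exists_lt_forall_le_survival hm hp hp1 hqδ (by linarith) hq1 hq
  refine ⟨p₁, hp₁, hp₁p, ?_⟩
  filter_upwards [hlim.eventually (gt_mem_nhds (show q < q + δ / 2 by linarith))] with k hk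
  linarith [hlow k]

end Survival

section Components

variable {V : Type} [Fintype V] {G H : SimpleGraph V} {d k R : ℕ} {s : Finset (Sym2 V)}

/-- The spanning subgraph of open edges of the percolation configuration `s`. -/
abbrev openGraph {V : Type*} (s : Finset (Sym2 V)) : SimpleGraph V :=
  SimpleGraph.fromEdgeSet (s : Set (Sym2 V))

lemma openGraph_le (hs : s ⊆ edgeFinset' G) : openGraph s ≤ G := fun _ _ h =>
  mem_edgeFinset'.1 (hs (Finset.mem_coe.1 ((SimpleGraph.fromEdgeSet_adj _).1 h).1))

lemma mem_compVerts {c : H.ConnectedComponent} {v : V} :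
    v ∈ compVerts H c ↔ H.connectedComponentMk v = c := by simp [compVerts]

lemma mem_compVerts_of_adj {c : H.ConnectedComponent} {a b : V} (ha : a ∈ compVerts H c)
    (hab : H.Adj a b) : b ∈ compVerts H c := by
  rw [mem_compVerts] at ha ⊢
  rw [← ha]
  exact SimpleGraph.ConnectedComponent.sound hab.symm.reachable

lemma compVerts_subset {S : Finset V} (hS : ∀ a ∈ S, ∀ b, H.Adj a b → b ∈ S) {v : V}
    (hv : v ∈ S) : compVerts H (H.connectedComponentMk v) ⊆ S := fun w hw => by
  obtain ⟨q⟩ := SimpleGraph.ConnectedComponent.exact (mem_compVerts.1 hw)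
  clear hw
  induction q with
  | nil => exact hv
  | cons h _ ih => exact hS _ (ih hv) _ h.symm

/-- The component of `y` once the edge `xy` is removed; the event `A^R_{x,y}` says that it has at
least `R` vertices. -/
def sideVerts (H : SimpleGraph V) (x y : V) : Finset V :=
  compVerts (H.deleteEdges {s(x, y)}) ((H.deleteEdges {s(x, y)}).connectedComponentMk y)

lemma eventA_iff {x y : V} : eventA H R x y ↔ R ≤ (sideVerts H x y).card := Iff.rfl

lemma mem_sideVerts_self (x y : V) : y ∈ sideVerts H x y := mem_compVerts.2 rfl

lemma mem_sideVerts_of_adj {x y a b : V} (ha : a ∈ sideVerts H x y) (hab : H.Adj a b)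
    (hne : s(a, b) ≠ s(x, y)) : b ∈ sideVerts H x y :=
  mem_compVerts_of_adj ha (by
    rw [SimpleGraph.deleteEdges_adj]
    exact ⟨hab, hne⟩)

lemma compVerts_subset_insert_biUnion_sideVerts (x : V) :
    compVerts H (H.connectedComponentMk x) ⊆
      insert x ((H.neighborFinset x).biUnion (sideVerts H x)) := by
  refine compVerts_subset (fun a ha b hab => ?_) (Finset.mem_insert_self _ _)
  simp only [Finset.mem_insert, Finset.mem_biUnion, SimpleGraph.mem_neighborFinset] at ha ⊢
  obtain rfl | ⟨y, hxy, hay⟩ := ha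
  · exact Or.inr ⟨b, hab, mem_sideVerts_self _ _⟩
  · by_cases he : s(a, b) = s(x, y)
    · rcases Sym2.eq_iff.1 he with ⟨rfl, rfl⟩ | ⟨rfl, rfl⟩
      · exact Or.inr ⟨b, hxy, mem_sideVerts_self _ _⟩
      · exact Or.inl rfl
    · exact Or.inr ⟨y, hxy, mem_sideVerts_of_adj hay hab he⟩

lemma compVerts_subset_union_sideVerts (x y : V) :
    compVerts H (H.connectedComponentMk x) ⊆ sideVerts H x y ∪ sideVerts H y x := by
  refine compVerts_subset (fun a ha b hab => ?_)
    (Finset.mem_union_right _ (mem_sideVerts_self y x))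
  rw [Finset.mem_union] at ha ⊢
  by_cases he : s(a, b) = s(x, y)
  · rcases Sym2.eq_iff.1 he with ⟨rfl, rfl⟩ | ⟨rfl, rfl⟩
    · exact Or.inl (mem_sideVerts_self _ _)
    · exact Or.inr (mem_sideVerts_self _ _)
  · exact ha.imp (mem_sideVerts_of_adj · hab he)
      (mem_sideVerts_of_adj · hab (by rwa [Sym2.eq_swap (a := y)]))

lemma card_compVerts_le_card_sideVerts_add (x y : V) :
    (compVerts H (H.connectedComponentMk x)).card ≤
      (sideVerts H x y).card + (sideVerts H y x).card :=
  (Finset.card_le_card (compVerts_subset_union_sideVerts x y)).trans (Finset.card_union_le _ _)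

lemma mem_V1set {x : V} : x ∈ V1set H R ↔ ∃ y, H.Adj x y ∧ eventA H R x y := by
  simp [V1set]

lemma card_compVerts_le_of_notMem_V1set {c : H.ConnectedComponent} {x : V}
    (hx : x ∈ compVerts H c) (hx1 : x ∉ V1set H R) :
    (compVerts H c).card ≤ H.degree x * (R - 1) + 1 := by
  rw [← mem_compVerts.1 hx, ← H.card_neighborFinset_eq_degree]
  refine (Finset.card_le_card (compVerts_subset_insert_biUnion_sideVerts x)).trans
    ((Finset.card_insert_le _ _).trans (Nat.add_le_add_right ?_ 1))
  refine Finset.card_biUnion_le_card_mul _ _ _ fun y hy => Nat.le_sub_one_of_lt ?_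
  rw [← not_le, ← eventA_iff]
  exact fun h => hx1 (mem_V1set.2 ⟨y, (H.mem_neighborFinset _ _).1 hy, h⟩)

lemma card_compVerts_le_of_notMem_E1set {c : H.ConnectedComponent} {e : Sym2 V}
    (he : e ∈ compEdges H c) (he1 : e ∉ E1set H R) : (compVerts H c).card ≤ 2 * R := by
  induction e with
  | _ x y =>
    obtain ⟨hxy, hc⟩ := Finset.mem_filter.1 he
    have hA : ¬ (eventA H R x y ∨ eventA H R y x) := fun h =>
      he1 (Finset.mem_filter.2 ⟨hxy, x, y, rfl, h⟩)
    rw [eventA_iff, eventA_iff] at hA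
    have hcard := card_compVerts_le_card_sideVerts_add (H := H) x y
    rw [hc x (Sym2.mem_mk_left x y)] at hcard
    omega

/-- The vertices at distance less than `k` from `v` along open non-backtracking walks whose first
step does not lead to `u`. -/
def openBranch (G : SimpleGraph V) (s : Finset (Sym2 V)) : ℕ → V → V → Finset V
  | 0, _, _ => ∅
  | k + 1, u, v => insert v
      (((nextVerts G u v).filter fun w => s(v, w) ∈ s).biUnion (openBranch G s k v))

lemma card_openBranch_le (hd : ∀ v, G.degree v ≤ d) (u v : V) :
    (openBranch G s k u v).card ≤ ∑ i ∈ Finset.range k, d ^ i := by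
  induction k generalizing u v with
  | zero => rfl
  | succ k ih =>
    have hnext : ((nextVerts G u v).filter fun w => s(v, w) ∈ s).card ≤ d :=
      (Finset.card_filter_le _ _).trans ((Finset.card_erase_le).trans (hd v))
    rw [openBranch, geom_sum_succ]
    exact (Finset.card_insert_le _ _).trans (Nat.add_le_add_right
      ((Finset.card_biUnion_le_card_mul _ _ _ fun w _ => ih v w).trans
        (Nat.mul_le_mul_right _ hnext)) 1)

lemma mem_openBranch_self {u v : V} (h : ¬ LongBranch G s k u v) : v ∈ openBranch G s k u v := by
  cases k with
  | zero => exact absurd trivial h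
  | succ k => exact Finset.mem_insert_self _ _

lemma mem_openBranch_of_adj (hs : s ⊆ edgeFinset' G) {u v : V} (h : ¬ LongBranch G s k u v)
    {a b : V} (ha : a ∈ openBranch G s k u v) (hab : s(a, b) ∈ s) (hne : s(a, b) ≠ s(u, v)) :
    b ∈ openBranch G s k u v := by
  induction k generalizing u v with
  | zero => exact absurd trivial h
  | succ k ih =>
    have hnext : ∀ w, w ≠ u → s(v, w) ∈ s →
        w ∈ (nextVerts G u v).filter (fun w => s(v, w) ∈ s) ∧ ¬ LongBranch G s k v w :=
      fun w hwu hvw =>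
        have hw := mem_nextVerts.2 ⟨hwu, mem_edgeFinset'.1 (hs hvw)⟩
        ⟨Finset.mem_filter.2 ⟨hw, hvw⟩, fun hl => h ⟨w, hw, hvw, hl⟩⟩
    rcases Finset.mem_insert.1 ha with rfl | ha
    · obtain ⟨hb, hbl⟩ := hnext b (fun hbu => hne (hbu ▸ Sym2.eq_swap)) hab
      exact Finset.mem_insert_of_mem (Finset.mem_biUnion.2 ⟨b, hb, mem_openBranch_self hbl⟩)
    · obtain ⟨w, hw, haw⟩ := Finset.mem_biUnion.1 ha
      obtain ⟨hw', hvw⟩ := Finset.mem_filter.1 hw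
      have hwl := (hnext w (mem_nextVerts.1 hw').1 hvw).2
      by_cases he : s(a, b) = s(v, w)
      · rcases Sym2.eq_iff.1 he with ⟨rfl, rfl⟩ | ⟨rfl, rfl⟩
        · exact Finset.mem_insert_of_mem
            (Finset.mem_biUnion.2 ⟨b, hw, mem_openBranch_self hwl⟩)
        · exact Finset.mem_insert_self _ _
      · exact Finset.mem_insert_of_mem (Finset.mem_biUnion.2 ⟨w, hw, ih hwl haw he⟩)

lemma longBranch_of_eventA (hd : ∀ v, G.degree v ≤ d) (hs : s ⊆ edgeFinset' G)
    (hR : ∑ i ∈ Finset.range k, d ^ i < R) {x y : V} (h : eventA (openGraph s) R x y) :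
    LongBranch G s k x y := by
  by_contra hn
  have hsub : sideVerts (openGraph s) x y ⊆ openBranch G s k x y :=
    compVerts_subset (fun a ha b hab => by
      rw [SimpleGraph.deleteEdges_adj, SimpleGraph.fromEdgeSet_adj] at hab
      exact mem_openBranch_of_adj hs hn ha hab.1.1 hab.2) (mem_openBranch_self hn)
  exact (h.trans ((Finset.card_le_card hsub).trans (card_openBranch_le hd x y))).not_gt hR

lemma LongBranch.exists_walk {x y : V} (h : LongBranch G s k x y) :
    ∃ (z : V) (q : G.Walk y z), q.length = k ∧ (s(x, y) :: q.edges).IsChain (· ≠ ·) ∧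
      ∀ e ∈ q.edges, e ∈ s := by
  induction k generalizing x y with
  | zero => exact ⟨y, .nil, by simp⟩
  | succ k ih =>
    obtain ⟨w, hw, hs, hl⟩ := h
    obtain ⟨hwx, hyw⟩ := mem_nextVerts.1 hw
    obtain ⟨z, q, hlen, hch, hq⟩ := ih hl
    refine ⟨z, .cons hyw q, by simpa using hlen, ?_, by simpa using ⟨hs, hq⟩⟩
    rw [SimpleGraph.Walk.edges_cons, List.isChain_cons_cons]
    refine ⟨fun h => hwx ?_, hch⟩
    rw [Sym2.eq_swap, Sym2.congr_right] at h
    exact h.symm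

lemma LongBranch.lt_card_compVerts (hk : k < G.girth) {x y : V} (h : LongBranch G s k x y) :
    k < (compVerts (openGraph s) ((openGraph s).connectedComponentMk y)).card := by
  obtain ⟨z, q, rfl, hch, hq⟩ := h.exists_walk
  have hpath := isPath_of_isChain_edges q (List.isChain_cons.1 hch).2 hk
  let r := q.transfer (openGraph s) (edges_subset_edgeSet_fromEdgeSet q hq)
  have hsub : q.support.toFinset ⊆
      compVerts (openGraph s) ((openGraph s).connectedComponentMk y) := fun a ha => by
    have har : a ∈ r.support := by
      rw [SimpleGraph.Walk.support_transfer]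
      exact List.mem_toFinset.1 ha
    exact mem_compVerts.2
      (SimpleGraph.ConnectedComponent.sound (r.takeUntil a har).reachable.symm)
  have hcard := Finset.card_le_card hsub
  rw [List.toFinset_card_of_nodup hpath.support_nodup, SimpleGraph.Walk.length_support] at hcard
  omega

end Components

section Sprinkling

variable {V : Type} {X Y : Finset V} {P Q : Finset (Sym2 V)}

/-- No edge of `P` joins `S` to its complement. -/
def ClosedUnder (P : Finset (Sym2 V)) (S : Finset V) : Prop :=
  ∀ a b, s(a, b) ∈ P → a ∈ S → b ∈ S

lemma ClosedUnder.mono {S : Finset V} (h : ClosedUnder Q S) (hPQ : P ⊆ Q) : ClosedUnder P S :=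
  fun a b hab => h a b (hPQ hab)

lemma ClosedUnder.compl [Fintype V] {S : Finset V} (h : ClosedUnder P S) : ClosedUnder P Sᶜ :=
  fun a b hab ha => Finset.mem_compl.2 fun hb =>
    Finset.mem_compl.1 ha (h b a (Sym2.eq_swap (a := b) ▸ hab) hb)

/-- The edges of `P` do not connect `X` to `Y`: some vertex set that no edge of `P` leaves contains
`X` and misses `Y`. -/
def Separated (P : Finset (Sym2 V)) (X Y : Finset V) : Prop :=
  ∃ S : Finset V, X ⊆ S ∧ Disjoint Y S ∧ ClosedUnder P S

lemma Separated.mono (h : Separated Q X Y) (hPQ : P ⊆ Q) : Separated P X Y := by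
  obtain ⟨S, hX, hY, hS⟩ := h
  exact ⟨S, hX, hY, hS.mono hPQ⟩

lemma Separated.symm [Finite V] (h : Separated P X Y) : Separated P Y X := by
  have := Fintype.ofFinite V
  obtain ⟨S, hX, hY, hS⟩ := h
  exact ⟨Sᶜ, Finset.subset_compl_iff_disjoint_right.2 hY,
    Finset.disjoint_left.2 fun a ha => by simpa using hX ha, hS.compl⟩

lemma Separated.left_or_right (h : Separated P X Y) (z : V) :
    Separated P X {z} ∨ Separated P {z} Y := by
  obtain ⟨S, hX, hY, hS⟩ := h
  by_cases hz : z ∈ S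
  · exact Or.inr ⟨S, Finset.singleton_subset_iff.2 hz, hY, hS⟩
  · exact Or.inl ⟨S, hX, Finset.disjoint_singleton_left.2 hz, hS⟩

lemma Separated.of_adj {z w : V} (h : Separated P X {w}) (hzw : s(z, w) ∈ P) :
    Separated P X {z} := by
  obtain ⟨S, hX, hw, hS⟩ := h
  rw [Finset.disjoint_singleton_left] at hw
  exact ⟨S, hX, Finset.disjoint_singleton_left.2 fun hz => hw (hS z w hzw hz), hS⟩

variable [Fintype V] {G : SimpleGraph V} {F : Finset (Sym2 V)} {b τ p : ℝ} {d r : ℕ}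

lemma ncard_neighborSet (G : SimpleGraph V) (v : V) : (G.neighborSet v).ncard = G.degree v := by
  rw [Set.ncard_eq_toFinset_card', Set.toFinset_card, G.card_neighborSet_eq_degree]

lemma IsExpander.degree_le (hG : IsExpander G b d) (v : V) : G.degree v ≤ d :=
  (ncard_neighborSet G v).symm.trans_le (hG.1 v)

lemma IsRegularExpander.isRegularOfDegree (hG : IsRegularExpander G b d) :
    G.IsRegularOfDegree d := fun v => (ncard_neighborSet G v).symm.trans (hG.2 v)

/-- The vertices joined to `X` by at most `r` edges of `G` outside `F`. -/
def joinedBall (G : SimpleGraph V) (F : Finset (Sym2 V)) (X : Finset V) (r : ℕ) : Finset V :=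
  {z | ∃ P ⊆ edgeFinset' G \ F, P.card ≤ r ∧ ¬ Separated P X {z}}

lemma mem_joinedBall {z : V} : z ∈ joinedBall G F X r ↔
    ∃ P ⊆ edgeFinset' G \ F, P.card ≤ r ∧ ¬ Separated P X {z} := by
  simp [joinedBall]

lemma joinedBall_mono (G : SimpleGraph V) (F : Finset (Sym2 V)) (X : Finset V) :
    Monotone (joinedBall G F X) := fun _ _ h z hz => by
  obtain ⟨P, hP, hcard, hsep⟩ := mem_joinedBall.1 hz
  exact mem_joinedBall.2 ⟨P, hP, hcard.trans h, hsep⟩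

lemma subset_joinedBall : X ⊆ joinedBall G F X r := fun _ hz =>
  mem_joinedBall.2 ⟨∅, Finset.empty_subset _, Nat.zero_le _, fun ⟨_, hX, hzS, _⟩ =>
    Finset.disjoint_singleton_left.1 hzS (hX hz)⟩

lemma mem_joinedBall_succ {z w : V} (hz : z ∈ joinedBall G F X r) (hzw : G.Adj z w)
    (hF : s(z, w) ∉ F) : w ∈ joinedBall G F X (r + 1) := by
  obtain ⟨P, hP, hcard, hsep⟩ := mem_joinedBall.1 hz
  refine mem_joinedBall.2 ⟨insert s(z, w) P, Finset.insert_subset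
    (Finset.mem_sdiff.2 ⟨mem_edgeFinset'.2 hzw, hF⟩) hP,
    (Finset.card_insert_le _ _).trans (Nat.add_le_add_right hcard 1), fun h => hsep ?_⟩
  exact (h.of_adj (Finset.mem_insert_self _ _)).mono (Finset.subset_insert _ _)

lemma cutCard_joinedBall_le (hd : ∀ v, G.degree v ≤ d) (F : Finset (Sym2 V)) (X : Finset V)
    (r : ℕ) : cutCard G (joinedBall G F X r) ≤
      F.card + d * (joinedBall G F X (r + 1) \ joinedBall G F X r).card := by
  set D := joinedBall G F X (r + 1) \ joinedBall G F X r
  have hcut : cutCard G (joinedBall G F X r) ≤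
      (F ∪ D.biUnion fun y => (G.neighborFinset y).image fun x => s(x, y)).card := by
    refine Finset.card_le_card fun e he => ?_
    obtain ⟨heG, x, hx, y, hy, rfl⟩ := Finset.mem_filter.1 he
    by_cases hF : s(x, y) ∈ F
    · exact Finset.mem_union_left _ hF
    · have hxy : G.Adj x y := mem_edgeFinset'.1 heG
      exact Finset.mem_union_right _ (Finset.mem_biUnion.2 ⟨y,
        Finset.mem_sdiff.2 ⟨mem_joinedBall_succ hx hxy hF, hy⟩,
        Finset.mem_image.2 ⟨x, (G.mem_neighborFinset _ _).2 hxy.symm, rfl⟩⟩)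
  rw [mul_comm d]
  exact hcut.trans ((Finset.card_union_le _ _).trans (Nat.add_le_add_left
    (Finset.card_biUnion_le_card_mul _ _ _ fun y _ => Finset.card_image_le.trans (hd y)) _))

lemma mul_le_mul_card_joinedBall (hb : 0 < b) (hG : IsExpander G b d)
    (hX : τ * Fintype.card V ≤ X.card) (hF : F.card ≤ b * τ * Fintype.card V / 2)
    (hr : ((joinedBall G F X r).card : ℝ) ≤ Fintype.card V / 2) :
    r * (b * τ * Fintype.card V / 2) ≤ d * (joinedBall G F X r).card := by
  induction r with
  | zero =>
    rw [Nat.cast_zero, zero_mul]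
    positivity
  | succ r ih =>
    have hmono := joinedBall_mono G F X r.le_succ
    have hr' : ((joinedBall G F X r).card : ℝ) ≤ Fintype.card V / 2 :=
      (Nat.cast_le.2 (Finset.card_le_card hmono)).trans hr
    have hstep := hG.2 _ hr'
    have hcut : (cutCard G (joinedBall G F X r) : ℝ) ≤
        F.card + d * ((joinedBall G F X (r + 1)).card - (joinedBall G F X r).card) := by
      rw [← Finset.cast_card_sdiff hmono]
      exact_mod_cast cutCard_joinedBall_le hG.degree_le F X r
    have hXr : (X.card : ℝ) ≤ (joinedBall G F X r).card :=
      Nat.cast_le.2 (Finset.card_le_card subset_joinedBall)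
    have hbX := mul_le_mul_of_nonneg_left (hX.trans hXr) hb.le
    push_cast
    linarith [ih hr']

lemma half_lt_card_joinedBall [Nonempty V] (hb : 0 < b) (hG : IsExpander G b d)
    (hr : d < r * (b * τ)) (hX : τ * Fintype.card V ≤ X.card)
    (hF : F.card ≤ b * τ * Fintype.card V / 2) :
    (Fintype.card V : ℝ) / 2 < (joinedBall G F X r).card := by
  by_contra! hcon
  have hn : (0 : ℝ) < Fintype.card V := Nat.cast_pos.2 Fintype.card_pos
  have hgrow := mul_le_mul_card_joinedBall hb hG hX hF hcon
  have hle := mul_le_mul_of_nonneg_left hcon (Nat.cast_nonneg (α := ℝ) d)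
  have hlt := mul_lt_mul_of_pos_right hr (half_pos hn)
  linarith

lemma exists_not_separated [Nonempty V] (hb : 0 < b) (hG : IsExpander G b d)
    (hr : d < r * (b * τ)) (hX : τ * Fintype.card V ≤ X.card) (hY : τ * Fintype.card V ≤ Y.card)
    (hF : F.card ≤ b * τ * Fintype.card V / 2) :
    ∃ P ⊆ edgeFinset' G \ F, P.card ≤ 2 * r ∧ ¬ Separated P X Y := by
  have hcard : Fintype.card V < (joinedBall G F X r).card + (joinedBall G F Y r).card := by
    have hBX := half_lt_card_joinedBall hb hG hr hX hF
    have hBY := half_lt_card_joinedBall hb hG hr hY hF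
    rify
    linarith
  obtain ⟨z, hzX, hzY⟩ : ∃ z, z ∈ joinedBall G F X r ∧ z ∈ joinedBall G F Y r := by
    rw [← Finset.not_disjoint_iff]
    intro hdis
    rw [← Finset.card_union_of_disjoint hdis] at hcard
    exact hcard.not_ge (Finset.card_le_univ _)
  obtain ⟨P, hP, hPr, hPX⟩ := mem_joinedBall.1 hzX
  obtain ⟨Q, hQ, hQr, hQY⟩ := mem_joinedBall.1 hzY
  refine ⟨P ∪ Q, Finset.union_subset hP hQ, (Finset.card_union_le _ _).trans (by omega),
    fun h => ?_⟩
  rcases h.left_or_right z with h | h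
  · exact hPX (h.mono Finset.subset_union_left)
  · exact hQY (h.symm.mono Finset.subset_union_right)

lemma exists_pairwiseDisjoint_not_separated [Nonempty V] (hb : 0 < b) (hG : IsExpander G b d)
    (hr : d < r * (b * τ)) (hX : τ * Fintype.card V ≤ X.card) (hY : τ * Fintype.card V ≤ Y.card)
    {m : ℕ} (hm : (m * (2 * r) : ℝ) ≤ b * τ * Fintype.card V / 2) :
    ∃ f : ℕ → Finset (Sym2 V), (∀ i < m, (f i).card ≤ 2 * r ∧ f i ⊆ edgeFinset' G ∧
      ¬ Separated (f i) X Y) ∧ (Finset.range m : Set ℕ).PairwiseDisjoint f := by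
  refine exists_pairwiseDisjoint_of_forall_disjoint
    (Q := fun P => P ⊆ edgeFinset' G ∧ ¬ Separated P X Y) fun F hF => ?_
  obtain ⟨P, hP, hPr, hsep⟩ := exists_not_separated (F := F) hb hG hr hX hY
    (le_trans (by exact_mod_cast hF) hm)
  exact ⟨P, Finset.disjoint_of_subset_left hP Finset.sdiff_disjoint, hPr,
    hP.trans Finset.sdiff_subset, hsep⟩

lemma bernoulliProb_separated_le [Nonempty V] (hb : 0 < b) (hp : p ∈ Set.Icc 0 1)
    (hG : IsExpander G b d) (hr : d < r * (b * τ)) (hX : τ * Fintype.card V ≤ X.card)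
    (hY : τ * Fintype.card V ≤ Y.card) {m : ℕ}
    (hm : (m * (2 * r) : ℝ) ≤ b * τ * Fintype.card V / 2) :
    bernoulliProb p (edgeFinset' G) (fun t => Separated t X Y) ≤ (1 - p ^ (2 * r)) ^ m := by
  obtain ⟨f, hf, hdis⟩ := exists_pairwiseDisjoint_not_separated hb hG hr hX hY hm
  calc bernoulliProb p (edgeFinset' G) (fun t => Separated t X Y)
      ≤ bernoulliProb p (edgeFinset' G) fun t => ∀ i ∈ Finset.range m, ¬ f i ⊆ t :=
        bernoulliProb_mono hp fun t _ ht i hi hsub =>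
          (hf i (Finset.mem_range.1 hi)).2.2 (ht.mono hsub)
    _ ≤ (1 - p ^ (2 * r)) ^ (Finset.range m).card :=
        bernoulliProb_forall_not_subset_le hp hdis
          (fun i hi => (hf i (Finset.mem_range.1 hi)).2.1)
          (fun i hi => (hf i (Finset.mem_range.1 hi)).1)
    _ = (1 - p ^ (2 * r)) ^ m := by rw [Finset.card_range]

lemma one_sub_pow_floor_le_exp {q : ℝ} (hq : q ∈ Set.Icc 0 1) (x : ℝ) :
    (1 - q) ^ ⌊x⌋₊ ≤ Real.exp (1 - q * x) :=
  calc (1 - q) ^ ⌊x⌋₊ ≤ Real.exp (-q) ^ ⌊x⌋₊ :=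
        pow_le_pow_left₀ (sub_nonneg.2 hq.2) (Real.one_sub_le_exp_neg q) _
    _ = Real.exp (⌊x⌋₊ * -q) := (Real.exp_nat_mul _ _).symm
    _ ≤ Real.exp (1 - q * x) := Real.exp_le_exp.2 (by
        nlinarith [hq.1, hq.2, Nat.lt_floor_add_one x])

lemma exists_bernoulliProb_separated_le (hb : 0 < b) (hτ : 0 < τ) (hp : p ∈ Set.Ioc 0 1) (d : ℕ) :
    ∃ c > 0, ∀ (V : Type) [Fintype V] [Nonempty V] (G : SimpleGraph V) (X Y : Finset V),
      IsExpander G b d → τ * Fintype.card V ≤ X.card → τ * Fintype.card V ≤ Y.card →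
      bernoulliProb p (edgeFinset' G) (fun t => Separated t X Y) ≤
        Real.exp (1 - c * Fintype.card V) := by
  obtain ⟨r, hr⟩ := exists_nat_gt (d / (b * τ))
  have hr0 : (0 : ℝ) < r := (by positivity : 0 ≤ d / (b * τ)).trans_lt hr
  rw [div_lt_iff₀ (mul_pos hb hτ)] at hr
  have hp' : p ∈ Set.Icc 0 1 := Set.Ioc_subset_Icc_self hp
  refine ⟨p ^ (2 * r) * (b * τ / (4 * r)), mul_pos (pow_pos hp.1 _) (by positivity),
    fun V _ _ G X Y hG hX hY => ?_⟩
  refine (bernoulliProb_separated_le (m := ⌊b * τ / (4 * r) * Fintype.card V⌋₊) hb hp' hG hr hX hY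
    ?_).trans ?_
  · calc (⌊b * τ / (4 * r) * Fintype.card V⌋₊ * (2 * r) : ℝ)
        ≤ b * τ / (4 * r) * Fintype.card V * (2 * r) := by
          gcongr
          exact Nat.floor_le (by positivity)
      _ = b * τ * Fintype.card V / 2 := by
          field_simp
          norm_num
  · rw [mul_assoc]
    exact one_sub_pow_floor_le_exp ⟨pow_nonneg hp'.1 _, pow_le_one₀ hp'.1 hp'.2⟩ _

end Sprinkling

section BigComponents

variable {V : Type} [Fintype V] {G H : SimpleGraph V} {s t u : Finset (Sym2 V)} {b τ p : ℝ}
  {d k : ℕ}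

/-- Some union of components of the configuration `u` divides `W` into two parts of size at least
`τ`. -/
def Splits (u : Finset (Sym2 V)) (W : Finset V) (τ : ℝ) : Prop :=
  ∃ S : Finset V, ClosedUnder u S ∧ τ ≤ (W ∩ S).card ∧ τ ≤ (W \ S).card

/-- The vertices of the components in `A`. -/
def unionVerts (H : SimpleGraph V) (A : Finset H.ConnectedComponent) : Finset V :=
  {v | H.connectedComponentMk v ∈ A}

lemma mem_unionVerts {A : Finset H.ConnectedComponent} {v : V} :
    v ∈ unionVerts H A ↔ H.connectedComponentMk v ∈ A := by
  simp [unionVerts]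

/-- The components of the configuration `s` with more than `k` vertices. -/
def bigComps (s : Finset (Sym2 V)) (k : ℕ) : Finset (openGraph s).ConnectedComponent :=
  {c | k < (compVerts (openGraph s) c).card}

/-- The vertices of the components of the configuration `s` with more than `k` vertices. -/
def bigVerts (s : Finset (Sym2 V)) (k : ℕ) : Finset V :=
  unionVerts (openGraph s) (bigComps s k)

lemma mem_bigVerts {v : V} : v ∈ bigVerts s k ↔
    k < (compVerts (openGraph s) ((openGraph s).connectedComponentMk v)).card := by
  simp [bigVerts, mem_unionVerts, bigComps]

lemma card_bigComps_mul_le (s : Finset (Sym2 V)) (k : ℕ) :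
    (bigComps s k).card * k ≤ Fintype.card V :=
  calc (bigComps s k).card * k
      ≤ ∑ c ∈ bigComps s k, (compVerts (openGraph s) c).card :=
        Finset.card_nsmul_le_sum _ _ _ fun _ hc => (Finset.mem_filter.1 hc).2.le
    _ ≤ ∑ c, (compVerts (openGraph s) c).card :=
        Finset.sum_le_univ_sum_of_nonneg fun _ => Nat.zero_le _
    _ = Fintype.card V := (Finset.card_eq_sum_card_fiberwise fun _ _ => Finset.mem_univ _).symm

lemma closedUnder_compVerts (c : (openGraph s).ConnectedComponent) :
    ClosedUnder s (compVerts (openGraph s) c) := fun a b hab ha => by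
  by_cases h : a = b
  · exact h ▸ ha
  · exact mem_compVerts_of_adj ha ((SimpleGraph.fromEdgeSet_adj _).2 ⟨Finset.mem_coe.2 hab, h⟩)

lemma ClosedUnder.compVerts_subset_iff {S : Finset V} (hS : ClosedUnder s S) {v : V} :
    compVerts (openGraph s) ((openGraph s).connectedComponentMk v) ⊆ S ↔ v ∈ S :=
  ⟨fun h => h (mem_compVerts.2 rfl), compVerts_subset fun a ha b hab =>
    hS a b (Finset.mem_coe.1 ((SimpleGraph.fromEdgeSet_adj _).1 hab).1) ha⟩

lemma Splits.exists_separated (h : Splits (s ∪ t) (bigVerts s k) τ) :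
    ∃ A ∈ (bigComps s k).powerset, (τ ≤ (unionVerts (openGraph s) A).card ∧
      τ ≤ (unionVerts (openGraph s) (bigComps s k \ A)).card) ∧
      Separated t (unionVerts (openGraph s) A) (unionVerts (openGraph s) (bigComps s k \ A)) := by
  obtain ⟨S, hcl, hin, hout⟩ := h
  let A := (bigComps s k).filter fun c => compVerts (openGraph s) c ⊆ S
  have hmem (v : V) : compVerts (openGraph s) ((openGraph s).connectedComponentMk v) ⊆ S ↔ v ∈ S :=
    (hcl.mono Finset.subset_union_left).compVerts_subset_iff
  have hA : unionVerts (openGraph s) A = bigVerts s k ∩ S := by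
    ext v
    simp [A, bigVerts, mem_unionVerts, hmem]
  have hA' : unionVerts (openGraph s) (bigComps s k \ A) = bigVerts s k \ S := by
    ext v
    simp +contextual [A, bigVerts, mem_unionVerts, hmem]
  refine ⟨A, Finset.mem_powerset.2 (Finset.filter_subset _ _), ?_⟩
  rw [hA, hA']
  exact ⟨⟨hin, hout⟩, S, Finset.inter_subset_right, Finset.sdiff_disjoint,
    hcl.mono Finset.subset_union_right⟩

lemma bernoulliProb_splits_le {q : ℝ} (hp : p ∈ Set.Icc 0 1) (hq : 0 ≤ q)
    (hsep : ∀ X Y : Finset V, τ ≤ X.card → τ ≤ Y.card →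
      bernoulliProb p (edgeFinset' G) (fun t => Separated t X Y) ≤ q) :
    bernoulliProb p (edgeFinset' G) (fun t => Splits (s ∪ t) (bigVerts s k) τ) ≤
      2 ^ (bigComps s k).card * q := by
  let I := (bigComps s k).powerset.filter fun A => τ ≤ (unionVerts (openGraph s) A).card ∧
    τ ≤ (unionVerts (openGraph s) (bigComps s k \ A)).card
  calc bernoulliProb p (edgeFinset' G) (fun t => Splits (s ∪ t) (bigVerts s k) τ)
      ≤ bernoulliProb p (edgeFinset' G) fun t => ∃ A ∈ I, Separated t
          (unionVerts (openGraph s) A) (unionVerts (openGraph s) (bigComps s k \ A)) :=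
        bernoulliProb_mono hp fun t _ h => by
          obtain ⟨A, hA, hcard, hAsep⟩ := h.exists_separated
          exact ⟨A, Finset.mem_filter.2 ⟨hA, hcard⟩, hAsep⟩
    _ ≤ ∑ A ∈ I, bernoulliProb p (edgeFinset' G) fun t => Separated t
          (unionVerts (openGraph s) A) (unionVerts (openGraph s) (bigComps s k \ A)) :=
        bernoulliProb_exists_le hp I _
    _ ≤ I.card • q := Finset.sum_le_card_nsmul _ _ _ fun A hA =>
        hsep _ _ (Finset.mem_filter.1 hA).2.1 (Finset.mem_filter.1 hA).2.2
    _ ≤ 2 ^ (bigComps s k).card * q := by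
        have hI : I.card ≤ 2 ^ (bigComps s k).card :=
          (Finset.card_filter_le _ _).trans_eq (Finset.card_powerset _)
        rw [nsmul_eq_mul]
        gcongr
        exact_mod_cast hI

lemma exists_bernoulliProb_splits_le (hb : 0 < b) (hτ : 0 < τ) (hp : p ∈ Set.Ioc 0 1) (d : ℕ) :
    ∃ c > 0, ∀ᶠ k in Filter.atTop, ∀ (V : Type) [Fintype V] [Nonempty V] (G : SimpleGraph V)
      (s : Finset (Sym2 V)), IsExpander G b d →
      bernoulliProb p (edgeFinset' G)
        (fun t => Splits (s ∪ t) (bigVerts s k) (τ * Fintype.card V)) ≤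
        Real.exp (1 - c * Fintype.card V) := by
  obtain ⟨c, hc, hsep⟩ := exists_bernoulliProb_separated_le hb hτ hp d
  refine ⟨c / 2, half_pos hc, ?_⟩
  filter_upwards [Filter.eventually_ge_atTop ⌈2 / c⌉₊] with k hk V _ _ G s hG
  have hck : 2 ≤ c * k := by
    rw [mul_comm, ← div_le_iff₀ hc]
    exact Nat.ceil_le.1 hk
  have hcomps : ((bigComps s k).card : ℝ) ≤ c / 2 * Fintype.card V := by
    have hn : ((bigComps s k).card * k : ℝ) ≤ Fintype.card V := by
      exact_mod_cast card_bigComps_mul_le s k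
    nlinarith [mul_le_mul_of_nonneg_left hck (Nat.cast_nonneg (α := ℝ) (bigComps s k).card)]
  calc bernoulliProb p (edgeFinset' G)
        (fun t => Splits (s ∪ t) (bigVerts s k) (τ * Fintype.card V))
      ≤ 2 ^ (bigComps s k).card * Real.exp (1 - c * Fintype.card V) :=
        bernoulliProb_splits_le (Set.Ioc_subset_Icc_self hp) (Real.exp_pos _).le
          fun X Y => hsep V G X Y hG
    _ ≤ Real.exp 1 ^ (bigComps s k).card * Real.exp (1 - c * Fintype.card V) := by
        gcongr
        linarith [Real.add_one_le_exp (1 : ℝ)]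
    _ = Real.exp ((bigComps s k).card * 1 + (1 - c * Fintype.card V)) := by
        rw [Real.exp_add, Real.exp_nat_mul]
    _ ≤ Real.exp (1 - c / 2 * Fintype.card V) := Real.exp_le_exp.2 (by linarith)

end BigComponents

section Giant

variable {V : Type} [Fintype V] {G H : SimpleGraph V} {s u : Finset (Sym2 V)} {W U : Finset V}
  {τ : ℝ} {d k R : ℕ}

lemma pos_of_not_splits {V : Type} [Finite V] {u : Finset (Sym2 V)} {W : Finset V}
    (h : ¬ Splits u W τ) : 0 < τ := by
  have := Fintype.ofFinite V
  by_contra! hτ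
  exact h ⟨Finset.univ, fun _ _ _ _ => Finset.mem_univ _, hτ.trans (Nat.cast_nonneg _),
    hτ.trans (Nat.cast_nonneg _)⟩

/-- If `W` were larger, then a minimal closed set `S` containing at least `τ` of its vertices would
split it: removing one component from `S` leaves fewer than `τ` of them. -/
lemma card_lt_of_not_splits {c : (openGraph u).ConnectedComponent}
    (hc : IsLargestComp (openGraph u) c) (h : ¬ Splits u W τ) :
    (W.card : ℝ) < (compVerts (openGraph u) c).card + 2 * τ := by
  have hτ := pos_of_not_splits h
  by_contra! hW
  obtain ⟨S, hS⟩ : ∃ S, Minimal (fun S => ClosedUnder u S ∧ τ ≤ (W ∩ S).card) S := by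
    refine exists_minimal_of_wellFoundedLT _ ⟨Finset.univ, fun _ _ _ _ => Finset.mem_univ _, ?_⟩
    rw [Finset.inter_univ]
    linarith [Nat.cast_nonneg (α := ℝ) (compVerts (openGraph u) c).card]
  obtain ⟨hcl, hSτ⟩ := hS.prop
  obtain ⟨v, hv⟩ : (W ∩ S).Nonempty := Finset.card_pos.1 (Nat.cast_pos.1 (hτ.trans_le hSτ))
  set K := compVerts (openGraph u) ((openGraph u).connectedComponentMk v)
  have hlt : S \ K < S := ⟨Finset.sdiff_subset, fun hsub =>
    (Finset.mem_sdiff.1 (hsub (Finset.mem_inter.1 hv).2)).2 (mem_compVerts.2 rfl)⟩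
  have hcl' : ClosedUnder u (S \ K) := fun a b hab ha => by
    obtain ⟨haS, haK⟩ := Finset.mem_sdiff.1 ha
    exact Finset.mem_sdiff.2 ⟨hcl a b hab haS, Finset.mem_compl.1
      ((closedUnder_compVerts _).compl a b hab (Finset.mem_compl.2 haK))⟩
  have hsmall : ((W ∩ (S \ K)).card : ℝ) < τ :=
    not_le.1 fun hle => hS.not_prop_of_lt hlt ⟨hcl', hle⟩
  have hWS : (W ∩ S).card ≤ (W ∩ (S \ K)).card + K.card := by
    rw [← Finset.inter_sdiff_assoc]
    exact tsub_le_iff_right.1 (Finset.le_card_sdiff _ _)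
  have hsum := Finset.card_sdiff_add_card_inter W S
  have hK := hc ((openGraph u).connectedComponentMk v)
  rify at hWS hsum hK
  exact h ⟨S, hcl, hSτ, by linarith⟩

/-- Passing from the configuration `s` to the larger configuration `u`, at most `τ` darts acquire a
long branch, and the big components of `s` merge up to `τ` vertices. -/
structure GoodSprinkling (G : SimpleGraph V) (k : ℕ) (τ : ℝ) (s u : Finset (Sym2 V)) : Prop where
  subset : s ⊆ u
  subset_edges : u ⊆ edgeFinset' G
  numLong_le : numLong G k u ≤ numLong G k s + τ
  not_splits : ¬ Splits u (bigVerts s k) τ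

/-- The darts `(x, y)` of `G` with `y ∈ U` for which the event `A^R_{x,y}` holds in the
configuration `u`. -/
def heavyDarts (G : SimpleGraph V) (u : Finset (Sym2 V)) (R : ℕ) (U : Finset V) : Finset G.Dart :=
  {a | eventA (openGraph u) R a.fst a.snd ∧ a.snd ∈ U}

lemma card_darts_longBranch_sdiff (hsu : s ⊆ u) :
    (({a | LongBranch G u k a.fst a.snd ∧ ¬ LongBranch G s k a.fst a.snd} :
      Finset G.Dart).card : ℝ) = numLong G k u - numLong G k s := by
  rw [numLong, numLong, ← Finset.sum_sub_distrib, Finset.card_filter, Nat.cast_sum]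
  refine Finset.sum_congr rfl fun a _ => ?_
  by_cases hs : LongBranch G s k a.fst a.snd
  · simp [hs, hs.mono hsu]
  · simp [hs]

namespace GoodSprinkling

lemma card_heavyDarts_le (h : GoodSprinkling G k τ s u) (hd : ∀ v, G.degree v ≤ d)
    (hk : k < G.girth) (hR : ∑ i ∈ Finset.range k, d ^ i < R) (U : Finset V) :
    ((heavyDarts G u R U).card : ℝ) ≤ τ + d * (bigVerts s k ∩ U).card := by
  have hsub : heavyDarts G u R U ⊆
      ({a | LongBranch G u k a.fst a.snd ∧ ¬ LongBranch G s k a.fst a.snd} : Finset G.Dart) ∪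
        ({a | a.snd ∈ bigVerts s k ∩ U} : Finset G.Dart) := fun a ha => by
    obtain ⟨-, hA, hU⟩ := Finset.mem_filter.1 ha
    by_cases hs : LongBranch G s k a.fst a.snd
    · exact Finset.mem_union_right _ (Finset.mem_filter.2 ⟨Finset.mem_univ _,
        Finset.mem_inter.2 ⟨mem_bigVerts.2 (hs.lt_card_compVerts hk), hU⟩⟩)
    · exact Finset.mem_union_left _ (Finset.mem_filter.2 ⟨Finset.mem_univ _,
        longBranch_of_eventA hd h.subset_edges hR hA, hs⟩)
  have hcard := (Finset.card_le_card hsub).trans ((Finset.card_union_le _ _).trans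
    (Nat.add_le_add_left (card_darts_snd_mem_le hd (bigVerts s k ∩ U)) _))
  have hgain := card_darts_longBranch_sdiff (G := G) (k := k) h.subset
  rify at hcard
  linarith [h.numLong_le]

end GoodSprinkling

lemma card_V1set_inter_le (hu : u ⊆ edgeFinset' G) (hU : ClosedUnder u U) :
    (V1set (openGraph u) R ∩ U).card ≤ (heavyDarts G u R U).card := by
  refine (Finset.card_le_card (t := (heavyDarts G u R U).image (·.fst)) fun x hx => ?_).trans
    Finset.card_image_le
  obtain ⟨hx1, hxU⟩ := Finset.mem_inter.1 hx
  obtain ⟨y, hxy, hA⟩ := mem_V1set.1 hx1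
  exact Finset.mem_image.2 ⟨⟨(x, y), openGraph_le hu hxy⟩, Finset.mem_filter.2
    ⟨Finset.mem_univ _, hA, hU x y ((SimpleGraph.fromEdgeSet_adj _).1 hxy).1 hxU⟩, rfl⟩

lemma card_V1set_sdiff_le (hu : u ⊆ edgeFinset' G) (c : (openGraph u).ConnectedComponent) :
    (V1set (openGraph u) R \ compVerts (openGraph u) c).card ≤
      (heavyDarts G u R (compVerts (openGraph u) c)ᶜ).card := by
  rw [Finset.sdiff_eq_inter_compl]
  exact card_V1set_inter_le hu (closedUnder_compVerts c).compl

lemma mem_compEdges_of_adj {c : H.ConnectedComponent} {x y : V} (hxy : H.Adj x y)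
    (hy : y ∈ compVerts H c) : s(x, y) ∈ compEdges H c := by
  refine Finset.mem_filter.2 ⟨mem_edgeFinset'.2 hxy, fun v hv => mem_compVerts.1 ?_⟩
  rcases Sym2.mem_iff.1 hv with rfl | rfl
  · exact mem_compVerts_of_adj hy hxy.symm
  · exact hy

lemma card_E1set_sdiff_le (hu : u ⊆ edgeFinset' G) (c : (openGraph u).ConnectedComponent) :
    (E1set (openGraph u) R \ compEdges (openGraph u) c).card ≤
      (heavyDarts G u R (compVerts (openGraph u) c)ᶜ).card := by
  refine (Finset.card_le_card (t := (heavyDarts G u R _).image (·.edge)) fun e he => ?_).trans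
    Finset.card_image_le
  obtain ⟨he1, hec⟩ := Finset.mem_sdiff.1 he
  obtain ⟨heH, x, y, rfl, hA⟩ := Finset.mem_filter.1 he1
  have hmem (a b : V) (hab : s(a, b) = s(x, y)) (hA : eventA (openGraph u) R a b) :
      s(a, b) ∈ (heavyDarts G u R (compVerts (openGraph u) c)ᶜ).image (·.edge) := by
    have hadj : (openGraph u).Adj a b := mem_edgeFinset'.1 (hab ▸ heH)
    exact Finset.mem_image.2 ⟨⟨(a, b), openGraph_le hu hadj⟩, Finset.mem_filter.2
      ⟨Finset.mem_univ _, hA, Finset.mem_compl.2 fun hb =>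
        hec (hab ▸ mem_compEdges_of_adj hadj hb)⟩, rfl⟩
  rcases hA with hA | hA
  · exact hmem x y rfl hA
  · exact Sym2.eq_swap (a := y) ▸ hmem y x Sym2.eq_swap hA

lemma card_compEdges_le (hH : H ≤ G) (hd : ∀ v, G.degree v ≤ d) (c : H.ConnectedComponent) :
    (compEdges H c).card ≤ (compVerts H c).card * d := by
  refine (Finset.card_le_card (t := (compVerts H c).biUnion fun x =>
    (H.neighborFinset x).image fun y => s(x, y)) fun e he => ?_).trans
    (Finset.card_biUnion_le_card_mul _ _ _ fun x _ =>
      Finset.card_image_le.trans ((SimpleGraph.degree_le_of_le hH).trans (hd x)))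
  induction e with
  | _ x y =>
    obtain ⟨hxy, hc⟩ := Finset.mem_filter.1 he
    exact Finset.mem_biUnion.2 ⟨x, mem_compVerts.2 (hc x (Sym2.mem_mk_left x y)),
      Finset.mem_image_of_mem _ ((H.mem_neighborFinset _ _).2 (mem_edgeFinset'.1 hxy))⟩

lemma card_compEdges_sdiff_E1set_le (hH : H ≤ G) (hd : ∀ v, G.degree v ≤ d)
    (c : H.ConnectedComponent) :
    (compEdges H c \ E1set H R).card ≤ 2 * R * d := by
  rcases (compEdges H c \ E1set H R).eq_empty_or_nonempty with h | ⟨e, he⟩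
  · simp [h]
  · obtain ⟨hec, he1⟩ := Finset.mem_sdiff.1 he
    exact (Finset.card_le_card Finset.sdiff_subset).trans ((card_compEdges_le hH hd c).trans
      (Nat.mul_le_mul_right _ (card_compVerts_le_of_notMem_E1set hec he1)))

lemma card_compVerts_le_mul_of_not_subset_V1set (hH : H ≤ G) (hd0 : 0 < d)
    (hd : ∀ v, G.degree v ≤ d) (hR : 0 < R) {c : H.ConnectedComponent}
    (h : ¬ compVerts H c ⊆ V1set H R) : (compVerts H c).card ≤ d * R := by
  obtain ⟨x, hxc, hx1⟩ := Finset.not_subset.1 h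
  calc (compVerts H c).card ≤ H.degree x * (R - 1) + 1 :=
        card_compVerts_le_of_notMem_V1set hxc hx1
    _ ≤ d * (R - 1) + d := Nat.add_le_add
        (Nat.mul_le_mul_right _ ((SimpleGraph.degree_le_of_le hH).trans (hd x))) hd0
    _ = d * R := by rw [← Nat.mul_succ, Nat.succ_eq_add_one, Nat.sub_add_cancel hR]

lemma card_compVerts_sdiff_V1set_le (hH : H ≤ G) (hd0 : 0 < d) (hd : ∀ v, G.degree v ≤ d)
    (hR : 0 < R) (c : H.ConnectedComponent) : (compVerts H c \ V1set H R).card ≤ d * R := by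
  by_cases h : compVerts H c ⊆ V1set H R
  · simp [Finset.sdiff_eq_empty_iff_subset.2 h]
  · exact (Finset.card_le_card Finset.sdiff_subset).trans
      (card_compVerts_le_mul_of_not_subset_V1set hH hd0 hd hR h)

namespace GoodSprinkling

variable {c : (openGraph u).ConnectedComponent}

/-- If `C` misses many big vertices then it contains few, as it does not split them. Then `C` is
small, being covered by `V₁` up to `d * R` vertices, and so the largest component cannot absorb the
big vertices. -/
lemma card_bigVerts_sdiff_le (h : GoodSprinkling G k τ s u) (hd0 : 0 < d)
    (hd : ∀ v, G.degree v ≤ d) (hk : k < G.girth) (hR : ∑ i ∈ Finset.range k, d ^ i < R)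
    (hdR : d * R ≤ τ) (hc : IsLargestComp (openGraph u) c) :
    ((bigVerts s k \ compVerts (openGraph u) c).card : ℝ) ≤ (d + 3) * τ := by
  have hτ := pos_of_not_splits h.not_splits
  set C := compVerts (openGraph u) c
  by_contra! hlarge
  have hin : ((bigVerts s k ∩ C).card : ℝ) < τ := not_le.1 fun hle =>
    h.not_splits ⟨C, closedUnder_compVerts c, hle, by nlinarith [Nat.cast_nonneg (α := ℝ) d]⟩
  have hC : (C.card : ℝ) ≤ (d + 1) * τ := by
    by_cases hsub : C ⊆ V1set (openGraph u) R
    · have hV := card_V1set_inter_le (R := R) h.subset_edges (closedUnder_compVerts c)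
      rw [Finset.inter_eq_right.2 hsub] at hV
      calc (C.card : ℝ) ≤ (heavyDarts G u R C).card := Nat.cast_le.2 hV
        _ ≤ τ + d * (bigVerts s k ∩ C).card := h.card_heavyDarts_le hd hk hR C
        _ ≤ τ + d * τ := by gcongr
        _ = (d + 1) * τ := by ring
    · have hdR' : (C.card : ℝ) ≤ d * R := by
        exact_mod_cast card_compVerts_le_mul_of_not_subset_V1set
          (openGraph_le h.subset_edges) hd0 hd (Nat.zero_lt_of_lt hR) hsub
      nlinarith [Nat.cast_nonneg (α := ℝ) d]
  have hbig := card_lt_of_not_splits hc h.not_splits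
  have hsdiff : ((bigVerts s k \ C).card : ℝ) ≤ (bigVerts s k).card :=
    Nat.cast_le.2 (Finset.card_le_card Finset.sdiff_subset)
  linarith

lemma card_heavyDarts_compl_le (h : GoodSprinkling G k τ s u) (hd0 : 0 < d)
    (hd : ∀ v, G.degree v ≤ d) (hk : k < G.girth) (hR : ∑ i ∈ Finset.range k, d ^ i < R)
    (hdR : d * R ≤ τ) (hc : IsLargestComp (openGraph u) c) :
    ((heavyDarts G u R (compVerts (openGraph u) c)ᶜ).card : ℝ) ≤ τ + d * ((d + 3) * τ) := by
  refine (h.card_heavyDarts_le hd hk hR _).trans ?_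
  rw [← Finset.sdiff_eq_inter_compl]
  gcongr
  exact h.card_bigVerts_sdiff_le hd0 hd hk hR hdR hc

lemma card_E1set_symmDiff_le (h : GoodSprinkling G k τ s u) (hd0 : 0 < d)
    (hd : ∀ v, G.degree v ≤ d) (hk : k < G.girth) (hR : ∑ i ∈ Finset.range k, d ^ i < R)
    (hdR : d * R ≤ τ) (hc : IsLargestComp (openGraph u) c) :
    ((E1set (openGraph u) R ∆ compEdges (openGraph u) c).card : ℝ) ≤ (d ^ 2 + 3 * d + 3) * τ := by
  have hcard := (Finset.card_union_le _ _).trans (Nat.add_le_add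
    (card_E1set_sdiff_le (R := R) h.subset_edges c)
    (card_compEdges_sdiff_E1set_le (R := R) (openGraph_le h.subset_edges) hd c))
  have hheavy := h.card_heavyDarts_compl_le hd0 hd hk hR hdR hc
  rify at hcard
  calc ((E1set (openGraph u) R ∆ compEdges (openGraph u) c).card : ℝ)
      ≤ (heavyDarts G u R (compVerts (openGraph u) c)ᶜ).card + 2 * R * d := hcard
    _ ≤ (d ^ 2 + 3 * d + 3) * τ := by linarith

lemma card_V1set_symmDiff_le (h : GoodSprinkling G k τ s u) (hd0 : 0 < d)
    (hd : ∀ v, G.degree v ≤ d) (hk : k < G.girth) (hR : ∑ i ∈ Finset.range k, d ^ i < R)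
    (hdR : d * R ≤ τ) (hc : IsLargestComp (openGraph u) c) :
    ((V1set (openGraph u) R ∆ compVerts (openGraph u) c).card : ℝ) ≤ (d ^ 2 + 3 * d + 3) * τ := by
  have hcard := (Finset.card_union_le _ _).trans (Nat.add_le_add
    (card_V1set_sdiff_le (R := R) h.subset_edges c)
    (card_compVerts_sdiff_V1set_le (openGraph_le h.subset_edges) hd0 hd
      (Nat.zero_lt_of_lt hR) c))
  have hheavy := h.card_heavyDarts_compl_le hd0 hd hk hR hdR hc
  have hτ := pos_of_not_splits h.not_splits
  rify at hcard
  calc ((V1set (openGraph u) R ∆ compVerts (openGraph u) c).card : ℝ)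
      ≤ (heavyDarts G u R (compVerts (openGraph u) c)ᶜ).card + d * R := hcard
    _ ≤ (d ^ 2 + 3 * d + 3) * τ := by linarith

end GoodSprinkling

end Giant

section ApproximateGiant

open Filter

variable {V : Type} [Fintype V] {G : SimpleGraph V} {b p p₁ p₂ δ : ℝ} {d k : ℕ}

lemma exists_two_mul_exp_add_exp_le {c₁ c₂ : ℝ} (hc₁ : 0 < c₁) (hc₂ : 0 < c₂) :
    ∃ c > 0, ∀ᶠ x in atTop,
      2 * Real.exp (-c₁ * x) + Real.exp (1 - c₂ * x) ≤ Real.exp (-c * x) := by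
  obtain ⟨c, hc, h₁, h₂⟩ : ∃ c > 0, 2 * c ≤ c₁ ∧ 2 * c ≤ c₂ :=
    ⟨min c₁ c₂ / 2, by positivity, by linarith [min_le_left c₁ c₂],
      by linarith [min_le_right c₁ c₂]⟩
  refine ⟨c, hc, ?_⟩
  filter_upwards [eventually_ge_atTop 0, (Real.tendsto_exp_atTop.comp
    (tendsto_id.const_mul_atTop hc)).eventually_ge_atTop (2 + Real.exp 1)] with x hx hexp
  calc 2 * Real.exp (-c₁ * x) + Real.exp (1 - c₂ * x)
      ≤ 2 * Real.exp (-(2 * c) * x) + Real.exp (1 - 2 * c * x) := by gcongr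
    _ = (2 + Real.exp 1) * Real.exp (-(2 * c) * x) := by
        rw [sub_eq_add_neg, Real.exp_add, neg_mul]
        ring
    _ ≤ Real.exp (c * x) * Real.exp (-(2 * c) * x) := by gcongr; exact hexp
    _ = Real.exp (-c * x) := by
        rw [← Real.exp_add]
        ring_nf

lemma exists_sprinkling_parameter (hp : p ≤ 1) (hp₁ : p₁ < p) :
    ∃ p₂ ∈ Set.Ioc (0 : ℝ) 1, 1 - p = (1 - p₁) * (1 - p₂) := by
  have h : 0 < 1 - p₁ := by linarith
  refine ⟨(p - p₁) / (1 - p₁), ⟨div_pos (by linarith) h, (div_le_one h).2 (by linarith)⟩, ?_⟩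
  field_simp
  ring

lemma percProb_le_of_goodSprinkling {q : ℝ} (hp₁ : p₁ ∈ Set.Icc 0 1) (hp₂ : p₂ ∈ Set.Icc 0 1)
    (hp : 1 - p = (1 - p₁) * (1 - p₂)) {x y τ : ℝ} (hτ : x - y ≤ τ)
    (hq : ∀ s, bernoulliProb p₂ (edgeFinset' G) (fun t => Splits (s ∪ t) (bigVerts s k) τ) ≤ q)
    {P : SimpleGraph V → Prop} (hP : ∀ s u, GoodSprinkling G k τ s u → ¬ P (openGraph u)) :
    percProb G p P ≤ bernoulliProb p (edgeFinset' G) (fun s => x ≤ numLong G k s) +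
      bernoulliProb p₁ (edgeFinset' G) (fun s => numLong G k s ≤ y) + q := by
  refine bernoulliProb_le_of_sprinkling hp₁ hp₂ hp (fun s hs t ht hPu => ?_) hq
  by_contra! h
  obtain ⟨hx, hy, hsplits⟩ := h
  exact hP s (s ∪ t) ⟨Finset.subset_union_left, Finset.union_subset hs ht, by linarith, hsplits⟩ hPu

lemma exists_percProb_le_of_goodSprinkling (hd : 3 ≤ d) (hp : 0 < p) (hp1 : p ≤ 1) (hb : 0 < b)
    (hδ : 0 < δ) : ∃ k, ∃ c > 0, ∃ N : ℝ, ∀ (V : Type) [Fintype V] (G : SimpleGraph V),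
      IsRegularExpander G b d → 2 * k < G.girth → N ≤ Fintype.card V →
      ∀ P : SimpleGraph V → Prop,
        (∀ s u, GoodSprinkling G k (δ * Fintype.card V) s u → ¬ P (openGraph u)) →
        percProb G p P ≤ Real.exp (-c * Fintype.card V) := by
  obtain ⟨p₁, hp₁, hp₁p, hsurv⟩ := exists_lt_eventually_survival_sub_le (m := d - 1) (by omega)
    hp hp1 (show 0 < δ / (3 * d) by positivity)
  obtain ⟨p₂, hp₂, hpp⟩ := exists_sprinkling_parameter hp1 hp₁p
  obtain ⟨c₂, hc₂, hsplits⟩ := exists_bernoulliProb_splits_le hb hδ hp₂ d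
  obtain ⟨k, hk, hsplits⟩ := (hsurv.and hsplits).exists
  obtain ⟨c₁, hc₁, htails⟩ := exists_numLong_tails (by omega : 0 < d) k
    (show 0 < δ / 3 by positivity)
  obtain ⟨c, hc, hexp⟩ := exists_two_mul_exp_add_exp_le hc₁ hc₂
  obtain ⟨N, hN⟩ := eventually_atTop.1 hexp
  refine ⟨k, c, hc, N, fun V _ G hG hg hNV P hP => ?_⟩
  have hreg := hG.isRegularOfDegree
  have : Nonempty V :=
    let ⟨v, _⟩ := exists_adj_of_girth_pos (G := G) (by omega)
    ⟨v⟩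
  have hτ : (d * Fintype.card V * survival p (d - 1) k + δ / 3 * Fintype.card V) -
      (d * Fintype.card V * survival p₁ (d - 1) k - δ / 3 * Fintype.card V) ≤
        δ * Fintype.card V := by
    calc _ = d * Fintype.card V * (survival p (d - 1) k - survival p₁ (d - 1) k) +
          2 * δ / 3 * Fintype.card V := by ring
      _ ≤ d * Fintype.card V * (δ / (3 * d)) + 2 * δ / 3 * Fintype.card V := by gcongr
      _ = δ * Fintype.card V := by field_simp; ring
  have hp₁' : p₁ ∈ Set.Icc (0 : ℝ) 1 := ⟨hp₁, (hp₁p.trans_le hp1).le⟩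
  have hperc := percProb_le_of_goodSprinkling hp₁' (Set.Ioc_subset_Icc_self hp₂) hpp hτ
    (fun s => hsplits V G s hG.1) hP
  linarith [hN _ hNV, (htails p ⟨hp.le, hp1⟩ V G hreg hg).1, (htails p₁ hp₁' V G hreg hg).2]

end ApproximateGiant

theorem E1_V1_approximate_giant_general (d : ℕ) (hd : 3 ≤ d) (p : ℝ) (hp : 0 < p) (hp1 : p ≤ 1)
    (ε b : ℝ) (hε : 0 < ε) (hb : 0 < b) :
    ∃ R : ℕ, 0 < R ∧ ∃ c > (0:ℝ),
      ∀ (V : Type) [Fintype V] [DecidableEq V] (G : SimpleGraph V),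
        IsRegularExpander G b d → ((2 * R : ℕ) : ℕ∞) < G.girth →
        percProb G p (fun H =>
            ∃ c₁ : H.ConnectedComponent, IsLargestComp H c₁ ∧
              ε * Fintype.card V < ((E1set H R ∆ compEdges H c₁).card : ℝ))
          ≤ Real.exp (-c * Fintype.card V) ∧
        percProb G p (fun H =>
            ∃ c₁ : H.ConnectedComponent, IsLargestComp H c₁ ∧
              ε * Fintype.card V < ((V1set H R ∆ compVerts H c₁).card : ℝ))
          ≤ Real.exp (-c * Fintype.card V) := by
  obtain ⟨δ, hδ, rfl⟩ : ∃ δ > 0, (d ^ 2 + 3 * d + 3) * δ = ε :=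
    ⟨ε / (d ^ 2 + 3 * d + 3), by positivity, by field_simp⟩
  obtain ⟨k, c, hc, N, hperc⟩ := exists_percProb_le_of_goodSprinkling hd hp hp1 hb hδ
  have hC : 0 < d / δ := by positivity
  obtain ⟨R, ⟨hcard, hNR⟩, hkR, hR⟩ := (((eventually_mul_le_card hd hC).and
    ((tendsto_natCast_atTop_atTop.const_mul_atTop hC).eventually_ge_atTop N)).and
    ((Filter.eventually_ge_atTop k).and
      (Filter.eventually_gt_atTop (∑ i ∈ Finset.range k, d ^ i)))).exists
  refine ⟨R, Nat.zero_lt_of_lt hR, c, hc, fun V _ inst G hG hg => ?_⟩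
  obtain rfl : inst = fun x y => Classical.propDecidable (x = y) := Subsingleton.elim _ _
  have hg : 2 * R < G.girth := Nat.cast_lt.1 hg
  have hRn := hcard V G hG.isRegularOfDegree hg
  have hdR : d * R ≤ δ * Fintype.card V := by
    rwa [div_mul_eq_mul_div, div_le_iff₀' hδ] at hRn
  have hperc := hperc V G hG (by omega) (hNR.trans hRn)
  simp only [mul_assoc _ δ]
  exact ⟨hperc _ fun s u h ⟨c₁, hc₁, hlt⟩ => hlt.not_ge
      (h.card_E1set_symmDiff_le (by omega) hG.1.degree_le (by omega) hR hdR hc₁),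
    hperc _ fun s u h ⟨c₁, hc₁, hlt⟩ => hlt.not_ge
      (h.card_V1set_symmDiff_le (by omega) hG.1.degree_le (by omega) hR hdR hc₁)⟩

theorem E1_V1_approximate_giant (d : ℕ) (hd : 3 ≤ d) (p : ℝ)
    (hp : 1 / ((d : ℝ) - 1) < p) (hp1 : p < 1)
    (ε b : ℝ) (hε : 0 < ε) (hb : 0 < b) :
    ∃ R : ℕ, 0 < R ∧ ∃ c > (0:ℝ),
      ∀ (V : Type) [Fintype V] [DecidableEq V] (G : SimpleGraph V),
        IsRegularExpander G b d → ((2 * R : ℕ) : ℕ∞) < G.girth →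
        percProb G p (fun H =>
            ∃ c₁ : H.ConnectedComponent, IsLargestComp H c₁ ∧
              ε * Fintype.card V < ((E1set H R ∆ compEdges H c₁).card : ℝ))
          ≤ Real.exp (-c * Fintype.card V) ∧
        percProb G p (fun H =>
            ∃ c₁ : H.ConnectedComponent, IsLargestComp H c₁ ∧
              ε * Fintype.card V < ((V1set H R ∆ compVerts H c₁).card : ℝ))
          ≤ Real.exp (-c * Fintype.card V) :=
  E1_V1_approximate_giant_general d hd p
    ((one_div_pos.2 (by linarith [show (3 : ℝ) ≤ d from mod_cast hd])).trans hp) hp1.le ε b hε hb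

end Percolation

end
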